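/- (Overlap increment estimate.) Let ψ be the (σ,λ)-GFF on V_N, and for 0 ≤ α < α' ≤ 1 define the increments of overlaps q_{α,α'}^N(v,v') = E[ψ_v(α,α') ψ_{v'}] / (𝒥_{σ²}(1) log N + C_0). Then for every 0 ≤ α < α' ≤ 1 and ρ ∈ (0,1], there exist constants C_7 = C_7(σ,λ) > 0 and C_8 = C_8(α,α',σ,λ) > 0 such that for N large enough (dependent on α and α', but independent of ρ except when α = 0), max_{v,v'∈A_{N,ρ}} |q_{α,α'}^N(v,v') − 𝒥̄_{σ²}(α ∧ b_N(v,v'), α' ∧ b_N(v,v'))| ≤ C_7/√(log N) + C_8 ρ. -/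

import Mathlib

open Filter
open scoped Classical

noncomputable section GFFCommon

/-- Vertices of `ℤ²`. -/
abbrev Vtx : Type := ℤ × ℤ

/-- Sample space: a real-valued field indexed by the vertices of `ℤ²`. -/
abbrev FieldSp : Type := Vtx → ℝ

/-- The box `V_N = {0,1,…,N}²`. -/
def VN (N : ℕ) : Finset Vtx := Finset.Icc (0, 0) ((N : ℤ), (N : ℤ))

/-- The boundary `∂B` of a finite box `B ⊆ ℤ²`:
vertices of `B` having a (Euclidean distance 1) neighbour outside `B`. -/
def bdry (B : Finset Vtx) : Finset Vtx :=
  B.filter fun v =>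
    ¬((v.1 + 1, v.2) ∈ B ∧ (v.1 - 1, v.2) ∈ B ∧ (v.1, v.2 + 1) ∈ B ∧ (v.1, v.2 - 1) ∈ B)

/-- The interior `B° = B ∖ ∂B`. -/
def intr (B : Finset Vtx) : Finset Vtx := B \ bdry B

/-- The neighbourhood `[v]_λ` of `v` in `V_N`. -/
def nbhd (N : ℕ) (lam : ℝ) (v : Vtx) : Finset Vtx :=
  if lam = 0 then VN N
  else if lam = 1 then {v}
  else (VN N).filter fun w =>
    |(w.1 : ℝ) - (v.1 : ℝ)| ≤ (N : ℝ) ^ ((1 : ℝ) - lam) / 2 ∧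
    |(w.2 : ℝ) - (v.2 : ℝ)| ≤ (N : ℝ) ^ ((1 : ℝ) - lam) / 2

/-- The σ-algebra `F_{∂[v]_λ ∪ [v]_λ^c}`, generated by the field variables on the
boundary of `[v]_λ` and those outside of it. -/
def scaleAlg (N : ℕ) (lam : ℝ) (v : Vtx) : MeasurableSpace FieldSp :=
  ⨆ w ∈ {w : Vtx | w ∈ VN N ∧ w ∉ intr (nbhd N lam v)},
    MeasurableSpace.comap (fun ω : FieldSp => ω w) inferInstance

/-- `G` is the Green function of simple random walk killed on `∂B`, normalized by `π/2`:
it vanishes unless both arguments are in `B°`, and in `B°` it satisfies the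
first-step (discrete Poisson equation) characterization
`G(x,y) = (1/4)·Σ_{x'∼x} G(x',y) + (π/2)·1_{x=y}`. -/
def IsGreenFn (B : Finset Vtx) (G : Vtx → Vtx → ℝ) : Prop :=
  (∀ x y : Vtx, x ∉ intr B ∨ y ∉ intr B → G x y = 0) ∧
  ∀ y ∈ intr B, ∀ x ∈ intr B,
    G x y = (G (x.1 + 1, x.2) y + G (x.1 - 1, x.2) y
        + G (x.1, x.2 + 1) y + G (x.1, x.2 - 1) y) / 4
      + (Real.pi / 2) * (if x = y then 1 else 0)

/-- `P` is the law (on the canonical space `FieldSp`) of the Gaussian free field on `V_N`: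
a centered Gaussian field with covariance the Green function `G_{V_N}`. -/
def IsGFF (N : ℕ) (P : MeasureTheory.Measure FieldSp) : Prop :=
  MeasureTheory.IsProbabilityMeasure P ∧
  ∃ G : Vtx → Vtx → ℝ, IsGreenFn (VN N) G ∧
    ∀ c : Vtx → ℝ,
      P.map (fun ω => ∑ v ∈ VN N, c v * ω v) =
        ProbabilityTheory.gaussianReal 0 (Real.toNNReal (∑ v ∈ VN N, ∑ w ∈ VN N, c v * c w * G v w))

open MeasureTheory in
/-- `φ_v(λ) = E[φ_v | F_{∂[v]_λ ∪ [v]_λ^c}]`. -/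
def phiScale (N : ℕ) (P : MeasureTheory.Measure FieldSp) (v : Vtx) (lam : ℝ) : FieldSp → ℝ :=
  P[fun ω : FieldSp => ω v | scaleAlg N lam v]

/-- Admissible parameters `(σ,λ)`: `σ_1,…,σ_M > 0` and `0 = λ_0 < λ_1 < … < λ_M = 1`. -/
def ScaleParams (M : ℕ) (sigv lamv : ℕ → ℝ) : Prop :=
  1 ≤ M ∧ (∀ i ∈ Finset.Icc 1 M, 0 < sigv i) ∧
  lamv 0 = 0 ∧ lamv M = 1 ∧ ∀ i, i < M → lamv i < lamv (i + 1)

/-- The `(σ,λ)`-GFF: `ψ_v = Σ_{i=1}^M σ_i (φ_v(λ_i) − φ_v(λ_{i−1}))`. -/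
def psiFld (N M : ℕ) (sigv lamv : ℕ → ℝ) (P : MeasureTheory.Measure FieldSp) (v : Vtx) : FieldSp → ℝ :=
  fun ω => ∑ i ∈ Finset.Icc 1 M, sigv i * (phiScale N P v (lamv i) ω - phiScale N P v (lamv (i - 1)) ω)

open MeasureTheory in
/-- `ψ_v(λ) = E[ψ_v | F_{∂[v]_λ ∪ [v]_λ^c}]`. -/
def psiScale (N M : ℕ) (sigv lamv : ℕ → ℝ) (P : MeasureTheory.Measure FieldSp) (v : Vtx) (lam : ℝ) :
    FieldSp → ℝ :=
  P[psiFld N M sigv lamv P v | scaleAlg N lam v]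

/-- The increment `ψ_v(λ,λ') = ψ_v(λ') − ψ_v(λ)`. -/
def psiInc (N M : ℕ) (sigv lamv : ℕ → ℝ) (P : MeasureTheory.Measure FieldSp) (v : Vtx) (lam lam' : ℝ) :
    FieldSp → ℝ :=
  fun ω => psiScale N M sigv lamv P v lam' ω - psiScale N M sigv lamv P v lam ω

/-- The step function `σ(s) = σ_1 1_{{0}}(s) + Σ_{i=1}^M σ_i 1_{(λ_{i−1},λ_i]}(s)`. -/
def stepFn (M : ℕ) (sigv lamv : ℕ → ℝ) (s : ℝ) : ℝ :=
  (if s = 0 then sigv 1 else 0) +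
  ∑ i ∈ Finset.Icc 1 M, if lamv (i - 1) < s ∧ s ≤ lamv i then sigv i else 0

/-- `𝒥_f(s) = ∫_0^s f(r) dr`. -/
def Jint (f : ℝ → ℝ) (s : ℝ) : ℝ := ∫ r in (0:ℝ)..s, f r

/-- `𝒥_f(s₁,s₂) = ∫_{s₁}^{s₂} f(r) dr`. -/
def Jint2 (f : ℝ → ℝ) (s₁ s₂ : ℝ) : ℝ := ∫ r in s₁..s₂, f r

/-- The speed function `𝒥_{σ²}`. -/
def Jsig2 (M : ℕ) (sigv lamv : ℕ → ℝ) (s : ℝ) : ℝ := Jint (fun r => (stepFn M sigv lamv r) ^ 2) s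

/-- The normalized speed function `𝒥̄_{σ²} = 𝒥_{σ²}/𝒥_{σ²}(1)`. -/
def JsigBar (M : ℕ) (sigv lamv : ℕ → ℝ) (s : ℝ) : ℝ := Jsig2 M sigv lamv s / Jsig2 M sigv lamv 1

/-- The concave hull on `[0,1]` of a function `f`, i.e. the pointwise infimum over all
concave functions dominating `f` on `[0,1]`. -/
def concaveHull (f : ℝ → ℝ) (s : ℝ) : ℝ :=
  sInf {y | ∃ g : ℝ → ℝ, ConcaveOn ℝ (Set.Icc (0:ℝ) 1) g ∧
    (∀ t ∈ Set.Icc (0:ℝ) 1, f t ≤ g t) ∧ y = g s}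

/-- The effective parameters: jump scales `0 = λ⁰ < … < λ^m = 1`, values
`σ̄_1 > … > σ̄_m > 0`, and the left-continuous non-increasing step function `σ̄`
such that `∫_0^s σ̄²` is the concavification of `𝒥_{σ²}`. -/
def EffParams (M : ℕ) (sigv lamv : ℕ → ℝ) (m : ℕ) (sigb lamb : ℕ → ℝ) (sigbar : ℝ → ℝ) : Prop :=
  1 ≤ m ∧ m ≤ M ∧ lamb 0 = 0 ∧ lamb m = 1 ∧ (∀ j, j < m → lamb j < lamb (j + 1)) ∧
  (∀ l, 1 ≤ l → l < m → sigb (l + 1) < sigb l) ∧ (∀ l ∈ Finset.Icc 1 m, 0 < sigb l) ∧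
  sigbar 0 = sigb 1 ∧
  (∀ l ∈ Finset.Icc 1 m, ∀ s : ℝ, lamb (l - 1) < s → s ≤ lamb l → sigbar s = sigb l) ∧
  (∀ s : ℝ, 0 < s → s ≤ 1 →
    concaveHull (Jsig2 M sigv lamv) s = ∫ r in (0:ℝ)..s, (sigbar r) ^ 2)

/-- `γ* = 𝒥_{σ²/σ̄}(1)`. -/
def gammaStar (M : ℕ) (sigv lamv : ℕ → ℝ) (sigbar : ℝ → ℝ) : ℝ :=
  ∫ s in (0:ℝ)..1, (stepFn M sigv lamv s) ^ 2 / sigbar s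

/-- The critical levels `γ^l = ∫_0^1 σ²(s)/σ̄(s ∧ λ^l) ds`, `γ⁰ = 0`. -/
def gammaL (M : ℕ) (sigv lamv : ℕ → ℝ) (lamb : ℕ → ℝ) (sigbar : ℝ → ℝ) (l : ℕ) : ℝ :=
  if l = 0 then 0 else ∫ s in (0:ℝ)..1, (stepFn M sigv lamv s) ^ 2 / sigbar (min s (lamb l))

/-- `EntE` is the entropy function `𝓔` of the model. -/
def IsEntropy (M : ℕ) (sigv lamv : ℕ → ℝ) (m : ℕ) (lamb : ℕ → ℝ) (sigbar : ℝ → ℝ)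
    (EntE : ℝ → ℝ) : Prop :=
  EntE 0 = 1 ∧
  ∀ l ∈ Finset.Icc 1 m, ∀ γ : ℝ,
    gammaL M sigv lamv lamb sigbar (l - 1) < γ → γ ≤ gammaL M sigv lamv lamb sigbar l →
      EntE γ = (1 - lamb (l - 1)) -
        (γ - ∫ s in (0:ℝ)..(lamb (l - 1)), (stepFn M sigv lamv s) ^ 2 / sigbar s) ^ 2 /
          Jint2 (fun r => (stepFn M sigv lamv r) ^ 2) (lamb (l - 1)) 1

/-- The limiting free energy of the `REM(σ)` model. -/
def fREM (σ β : ℝ) : ℝ :=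
  if (2 / σ) < β then 2 * (β / (2 / σ)) else 1 + (β / (2 / σ)) ^ 2

/-- The index `l_β`. -/
def lbeta (m : ℕ) (sigb : ℕ → ℝ) (β : ℝ) : ℕ :=
  if β ≤ 2 / sigb m then sInf {l : ℕ | 1 ≤ l ∧ β ≤ 2 / sigb l} else m + 1

/-- The limiting free energy `f^ψ(β)`, written with the `l_β` split. -/
def fpsiLim (m : ℕ) (sigb lamb : ℕ → ℝ) (β : ℝ) : ℝ :=
  (∑ j ∈ Finset.Icc 1 (lbeta m sigb β - 1), (2 * β / (2 / sigb j)) * (lamb j - lamb (j - 1))) +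
  ∑ j ∈ Finset.Icc (lbeta m sigb β) m, (1 + β ^ 2 / (2 / sigb j) ^ 2) * (lamb j - lamb (j - 1))

/-- The set `ℬ` of non-critical inverse temperatures. -/
def critSet (m : ℕ) (sigb : ℕ → ℝ) : Set ℝ :=
  {β | 0 < β ∧ ∀ j ∈ Finset.Icc 1 m, β ≠ 2 / sigb j}

/-- The partition function `Z_N^ψ(β)`. -/
def ZN (N M : ℕ) (sigv lamv : ℕ → ℝ) (P : MeasureTheory.Measure FieldSp) (β : ℝ) (ω : FieldSp) : ℝ :=
  ∑ v ∈ VN N, Real.exp (β * psiFld N M sigv lamv P v ω)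

/-- The free energy `f_N^ψ(β)` on `V_N`. -/
def freeEnergy (N M : ℕ) (sigv lamv : ℕ → ℝ) (P : MeasureTheory.Measure FieldSp) (β : ℝ) (ω : FieldSp) : ℝ :=
  (Real.log ((N : ℝ) ^ 2))⁻¹ * Real.log (ZN N M sigv lamv P β ω)

/-- The set `A_{N,ρ}` of points at distance at least `N^{1−ρ}` from `ℤ² ∖ V_N`. -/
def AN (N : ℕ) (ρ : ℝ) : Finset Vtx :=
  (VN N).filter fun v => ∀ z : Vtx, z ∉ VN N →
    (N : ℝ) ^ ((1 : ℝ) - ρ) ≤ Real.sqrt (((v.1 : ℝ) - (z.1 : ℝ)) ^ 2 + ((v.2 : ℝ) - (z.2 : ℝ)) ^ 2)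

/-- The restricted partition function `Z_{N,ρ}^ψ(β)`. -/
def ZNres (N M : ℕ) (sigv lamv : ℕ → ℝ) (P : MeasureTheory.Measure FieldSp) (β ρ : ℝ) (ω : FieldSp) : ℝ :=
  ∑ v ∈ AN N ρ, Real.exp (β * psiFld N M sigv lamv P v ω)

/-- The free energy `f_{N,ρ}^ψ(β)` on `A_{N,ρ}`. -/
def freeEnergyRes (N M : ℕ) (sigv lamv : ℕ → ℝ) (P : MeasureTheory.Measure FieldSp) (β ρ : ℝ)
    (ω : FieldSp) : ℝ :=
  (Real.log ((N : ℝ) ^ 2))⁻¹ * Real.log (ZNres N M sigv lamv P β ρ ω)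

/-- The Gibbs weight `𝒢_{β,N}({v})`. -/
def gibbsW (N M : ℕ) (sigv lamv : ℕ → ℝ) (P : MeasureTheory.Measure FieldSp) (β : ℝ) (v : Vtx)
    (ω : FieldSp) : ℝ :=
  Real.exp (β * psiFld N M sigv lamv P v ω) / ZN N M sigv lamv P β ω

/-- The restricted Gibbs weight `𝒢_{β,N,ρ}({v})`. -/
def gibbsWres (N M : ℕ) (sigv lamv : ℕ → ℝ) (P : MeasureTheory.Measure FieldSp) (β ρ : ℝ) (v : Vtx)
    (ω : FieldSp) : ℝ :=
  Real.exp (β * psiFld N M sigv lamv P v ω) / ZNres N M sigv lamv P β ρ ω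

/-- `E𝒢_{β,N}^{×s}[F]`: the mean over the disorder of the `s`-fold Gibbs average of `F`. -/
def gibbsExp (N M : ℕ) (sigv lamv : ℕ → ℝ) (P : MeasureTheory.Measure FieldSp) (β : ℝ) (s : ℕ)
    (F : (Fin s → Vtx) → ℝ) : ℝ :=
  ∫ ω, (∑ vv ∈ Fintype.piFinset (fun _ : Fin s => VN N),
    (∏ i, gibbsW N M sigv lamv P β (vv i) ω) * F vv) ∂P

/-- `E𝒢_{β,N,ρ}^{×s}[F]`, with an `ω`-dependent integrand allowed. -/
def gibbsExpRes (N M : ℕ) (sigv lamv : ℕ → ℝ) (P : MeasureTheory.Measure FieldSp) (β ρ : ℝ) (s : ℕ)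
    (F : (Fin s → Vtx) → FieldSp → ℝ) : ℝ :=
  ∫ ω, (∑ vv ∈ Fintype.piFinset (fun _ : Fin s => AN N ρ),
    (∏ i, gibbsWres N M sigv lamv P β ρ (vv i) ω) * F vv ω) ∂P

/-- `E𝒢_{β,N}^{×s}[F]`, with an `ω`-dependent integrand allowed. -/
def gibbsExpW (N M : ℕ) (sigv lamv : ℕ → ℝ) (P : MeasureTheory.Measure FieldSp) (β : ℝ) (s : ℕ)
    (F : (Fin s → Vtx) → FieldSp → ℝ) : ℝ :=
  ∫ ω, (∑ vv ∈ Fintype.piFinset (fun _ : Fin s => VN N),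
    (∏ i, gibbsW N M sigv lamv P β (vv i) ω) * F vv ω) ∂P

/-- The covariance `E[ψ_v ψ_{v'}]`. -/
def psiCov (N M : ℕ) (sigv lamv : ℕ → ℝ) (P : MeasureTheory.Measure FieldSp) (v v' : Vtx) : ℝ :=
  ∫ ω, psiFld N M sigv lamv P v ω * psiFld N M sigv lamv P v' ω ∂P

/-- `C₀` is a constant witnessing the uniform variance upper bound
`max_{v∈V_N} E[ψ_v²] ≤ 𝒥_{σ²}(1) log N + C₀` for `N` large. -/
def IsVarBound (M : ℕ) (sigv lamv : ℕ → ℝ) (P : ℕ → MeasureTheory.Measure FieldSp) (C₀ : ℝ) : Prop :=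
  0 < C₀ ∧ ∃ N₀ : ℕ, ∀ N ≥ N₀, ∀ v ∈ VN N,
    psiCov N M sigv lamv (P N) v v ≤ Jsig2 M sigv lamv 1 * Real.log N + C₀

/-- The overlap `q^N(v,v')`. -/
def overlapQ (N M : ℕ) (sigv lamv : ℕ → ℝ) (P : MeasureTheory.Measure FieldSp) (C₀ : ℝ) (v v' : Vtx) : ℝ :=
  psiCov N M sigv lamv P v v' / (Jsig2 M sigv lamv 1 * Real.log N + C₀)

/-- Convergence in probability to a constant, for a sequence of random variables on a
sequence of probability spaces. -/
def TendstoInProb (P : ℕ → MeasureTheory.Measure FieldSp) (X : ℕ → FieldSp → ℝ) (c : ℝ) : Prop :=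
  ∀ ε : ℝ, 0 < ε → Tendsto (fun N => P N {ω | ε < |X N ω - c|}) atTop (nhds 0)

/-- Convergence in `L^p` to a constant. -/
def TendstoLp (P : ℕ → MeasureTheory.Measure FieldSp) (X : ℕ → FieldSp → ℝ) (p c : ℝ) : Prop :=
  Tendsto (fun N => ∫ ω, |X N ω - c| ^ p ∂(P N)) atTop (nhds 0)

/-- The branching scale `b_N(v,v')`. -/
def bScale (N : ℕ) (v v' : Vtx) : ℝ :=
  sSup {lam : ℝ | lam ∈ Set.Icc (0:ℝ) 1 ∧ ((nbhd N lam v) ∩ (nbhd N lam v')).Nonempty}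

end GFFCommon


noncomputable section PotKernel

def pkc (t : ℝ) : ℝ := 2 - Real.cos t
def pkw (t : ℝ) : ℝ := Real.sqrt (pkc t ^ 2 - 1)
def pkq (t : ℝ) : ℝ := pkc t - pkw t
def pkf (m n : ℤ) (t : ℝ) : ℝ := (1 - pkq t ^ m.natAbs * Real.cos (n * t)) / pkw t
def pka (m n : ℤ) : ℝ := ∫ t in (0:ℝ)..Real.pi, pkf m n t

lemma pkc_ge (t : ℝ) : 1 ≤ pkc t := by
  unfold pkc; linarith [Real.cos_le_one t]

lemma pkw_nonneg (t : ℝ) : 0 ≤ pkw t := Real.sqrt_nonneg _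

lemma pkw_sq (t : ℝ) : pkw t ^ 2 = pkc t ^ 2 - 1 := by
  unfold pkw
  rw [Real.sq_sqrt]
  nlinarith [pkc_ge t]

lemma pkq_mul (t : ℝ) : pkq t * (pkc t + pkw t) = 1 := by
  have := pkw_sq t
  unfold pkq; nlinarith

lemma pkq_pos (t : ℝ) : 0 < pkq t := by
  have h := pkq_mul t
  have h1 := pkc_ge t
  have h2 := pkw_nonneg t
  by_contra hq
  push Not at hq
  nlinarith

lemma pkq_le_one (t : ℝ) : pkq t ≤ 1 := by
  have h := pkq_mul t
  have h1 := pkc_ge t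
  have h2 := pkw_nonneg t
  have := pkq_pos t
  nlinarith

lemma one_sub_pkq_le (t : ℝ) : 1 - pkq t ≤ pkw t := by
  unfold pkq; linarith [pkc_ge t]

lemma pkw_ge {t : ℝ} (h0 : 0 ≤ t) (h1 : t ≤ Real.pi) : 2 * t / Real.pi ≤ pkw t := by
  have hc := Real.cos_le_one_sub_mul_cos_sq (x := t) (by rw [abs_of_nonneg h0]; exact h1)
  have hsq := pkw_sq t
  apply le_of_sq_le_sq₀ _ (pkw_nonneg t)
  rw [hsq]
  have hc1 := Real.cos_le_one t
  have : (2 * t / Real.pi) ^ 2 = 2 * (2 / Real.pi ^ 2 * t ^ 2) := by ring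
  rw [this]
  unfold pkc
  nlinarith
where
  le_of_sq_le_sq₀ {a b : ℝ} (h : a ^ 2 ≤ b ^ 2) (hb : 0 ≤ b) : a ≤ b := le_trans (le_abs_self a) (abs_le_of_sq_le_sq h hb)

lemma pkw_pos {t : ℝ} (h0 : 0 < t) (h1 : t ≤ Real.pi) : 0 < pkw t :=
  lt_of_lt_of_le (by positivity) (pkw_ge h0.le h1)

lemma pkt_le {t : ℝ} (h0 : 0 ≤ t) (h1 : t ≤ Real.pi) : t ≤ 2 * pkw t := by
  have h := pkw_ge h0 h1
  have hp := Real.pi_le_four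
  have hp0 := Real.pi_pos
  rw [div_le_iff₀ hp0] at h
  nlinarith [pkw_nonneg t]

lemma pk_num_nonneg (m n : ℤ) (t : ℝ) : 0 ≤ 1 - pkq t ^ m.natAbs * Real.cos (n * t) := by
  have h1 : pkq t ^ m.natAbs ≤ 1 := pow_le_one₀ (pkq_pos t).le (pkq_le_one t)
  have h2 : 0 ≤ pkq t ^ m.natAbs := pow_nonneg (pkq_pos t).le _
  nlinarith [Real.cos_le_one (n * t)]

lemma pk_num_le (m n : ℤ) {t : ℝ} (h0 : 0 ≤ t) (h1 : t ≤ Real.pi) :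
    1 - pkq t ^ m.natAbs * Real.cos (n * t) ≤ (|(m:ℝ)| + 2 * |(n:ℝ)|) * pkw t := by
  have hb : 1 - (m.natAbs : ℝ) * pkw t ≤ pkq t ^ m.natAbs := by
    have := one_add_mul_le_pow (a := pkq t - 1) (by linarith [pkq_pos t]) m.natAbs
    have h3 := one_sub_pkq_le t
    have h4 : (0:ℝ) ≤ m.natAbs := by positivity
    rw [show 1 + (pkq t - 1) = pkq t by ring] at this
    nlinarith
  have hm : (m.natAbs : ℝ) = |(m:ℝ)| := by rw [Nat.cast_natAbs]; simp
  rw [hm] at hb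
  have hc : 1 - |(n:ℝ)| * t ≤ Real.cos (n * t) := by
    have h5 : |(n:ℝ) * t| = |(n:ℝ)| * t := by rw [abs_mul, abs_of_nonneg h0]
    rcases le_total (|(n:ℝ)| * t) 2 with h | h
    · have := Real.one_sub_sq_div_two_le_cos (x := n * t)
      rw [← sq_abs, h5] at this
      have : 0 ≤ |(n:ℝ)| * t := by positivity
      nlinarith
    · linarith [Real.neg_one_le_cos (n * t)]
  have h6 := pkt_le h0 h1
  have h7 : pkq t ^ m.natAbs ≤ 1 := pow_le_one₀ (pkq_pos t).le (pkq_le_one t)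
  have h8 : 0 ≤ pkq t ^ m.natAbs := pow_nonneg (pkq_pos t).le _
  have h9 : |(n:ℝ)| * t ≤ |(n:ℝ)| * (2 * pkw t) := by gcongr
  have h10 : 0 ≤ |(n:ℝ)| * t := by positivity
  nlinarith

lemma pkf_nonneg (m n : ℤ) (t : ℝ) : 0 ≤ pkf m n t :=
  div_nonneg (pk_num_nonneg m n t) (pkw_nonneg t)

lemma pkf_le (m n : ℤ) {t : ℝ} (h0 : 0 ≤ t) (h1 : t ≤ Real.pi) :
    pkf m n t ≤ |(m:ℝ)| + 2 * |(n:ℝ)| := by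
  unfold pkf
  rcases (pkw_nonneg t).eq_or_lt with h | h
  · rw [← h]; simp; positivity
  · rw [div_le_iff₀ h]; exact pk_num_le m n h0 h1

lemma pkw_cont : Continuous pkw := by unfold pkw pkc; fun_prop
lemma pkq_cont : Continuous pkq := by unfold pkq pkc; have := pkw_cont; fun_prop

lemma pkf_meas (m n : ℤ) : Measurable (pkf m n) := by
  unfold pkf
  have := pkw_cont.measurable
  have := pkq_cont.measurable
  fun_prop

lemma pkf_int (m n : ℤ) {a b : ℝ} (ha : 0 ≤ a) (hab : a ≤ b) (hb : b ≤ Real.pi) :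
    IntervalIntegrable (pkf m n) MeasureTheory.volume a b := by
  rw [intervalIntegrable_iff_integrableOn_Ioc_of_le hab]
  refine MeasureTheory.Measure.integrableOn_of_bounded (M := |(m:ℝ)| + 2 * |(n:ℝ)|) (by simp)
    (pkf_meas m n).aestronglyMeasurable ?_
  filter_upwards [MeasureTheory.ae_restrict_mem measurableSet_Ioc] with t ht
  rw [Real.norm_of_nonneg (pkf_nonneg _ _ _)]
  exact pkf_le m n (ha.trans ht.1.le) (ht.2.trans hb)

lemma pkf_avg (m n : ℤ) {t : ℝ} (h0 : 0 < t) (h1 : t ≤ Real.pi) :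
    (pkf (m+1) n t + pkf (m-1) n t + pkf m (n+1) t + pkf m (n-1) t) / 4
      = pkf m n t + (if m = 0 then Real.cos (n * t) / 2 else 0) := by
  have hw := pkw_pos h0 h1
  have hq := pkq_mul t
  have hqd : pkq t = pkc t - pkw t := rfl
  have hcd : pkc t = 2 - Real.cos t := rfl
  have hs : Real.cos ((n+1:ℤ) * t) + Real.cos ((n-1:ℤ) * t) = 2 * Real.cos t * Real.cos (n * t) := by
    push_cast
    rw [add_mul, sub_mul, one_mul, Real.cos_add, Real.cos_sub]; ring
  have key : (1 - pkq t ^ (m+1).natAbs * Real.cos (n*t)) + (1 - pkq t ^ (m-1).natAbs * Real.cos (n*t))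
      + (1 - pkq t ^ m.natAbs * Real.cos ((n+1:ℤ)*t)) + (1 - pkq t ^ m.natAbs * Real.cos ((n-1:ℤ)*t))
      = 4 * (1 - pkq t ^ m.natAbs * Real.cos (n*t)) + (if m = 0 then Real.cos (n * t) * 2 * pkw t else 0) := by
    have e1 : pkq t ^ m.natAbs * Real.cos ((n+1:ℤ)*t) = pkq t ^ m.natAbs * (2 * Real.cos t * Real.cos (n * t))
       - pkq t ^ m.natAbs * Real.cos ((n-1:ℤ)*t) := by rw [← hs]; ring
    rw [e1]
    rcases eq_or_ne m 0 with rfl | hm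
    · simp
      rw [hqd, hcd]; ring
    · rw [if_neg hm]
      have e2 : pkq t ^ (m+1).natAbs + pkq t ^ (m-1).natAbs = 2 * pkc t * pkq t ^ m.natAbs := by
        have hqq : pkq t ^ 2 + 1 = 2 * pkc t * pkq t := by
          have : pkw t = pkc t - pkq t := by rw [hqd]; ring
          rw [this] at hq; nlinarith
        obtain ⟨k, hk⟩ : ∃ k, m.natAbs = k + 1 := ⟨m.natAbs - 1, by omega⟩
        have : ((m+1).natAbs = k + 2 ∧ (m-1).natAbs = k) ∨ ((m+1).natAbs = k ∧ (m-1).natAbs = k+2) := by omega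
        rw [hk]
        rcases this with ⟨a, b⟩ | ⟨a, b⟩ <;> rw [a, b] <;> linear_combination pkq t ^ k * hqq
      have : pkq t ^ (m-1).natAbs = 2 * pkc t * pkq t ^ m.natAbs - pkq t ^ (m+1).natAbs := by rw [← e2]; ring
      rw [this, hcd]; ring
  unfold pkf
  rw [← add_div, ← add_div, ← add_div, key]
  split_ifs <;> field_simp <;> ring

lemma pka_poisson (m n : ℤ) :
    (pka (m+1) n + pka (m-1) n + pka m (n+1) + pka m (n-1)) / 4
      = pka m n + Real.pi / 2 * (if m = 0 ∧ n = 0 then 1 else 0) := by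
  have hi : ∀ m n, IntervalIntegrable (pkf m n) MeasureTheory.volume 0 Real.pi :=
    fun m n => pkf_int m n le_rfl Real.pi_pos.le le_rfl
  unfold pka
  rw [← intervalIntegral.integral_add (hi _ _) (hi _ _),
    ← intervalIntegral.integral_add ((hi _ _).add (hi _ _)) (hi _ _),
    ← intervalIntegral.integral_add (((hi _ _).add (hi _ _)).add (hi _ _)) (hi _ _),
    ← intervalIntegral.integral_div]
  have hc : IntervalIntegrable (fun t => if m = 0 then Real.cos (n * t) / 2 else 0)
      MeasureTheory.volume 0 Real.pi := by
    apply Continuous.intervalIntegrable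
    split_ifs <;> fun_prop
  have : ∫ t in (0:ℝ)..Real.pi, (pkf (m+1) n t + pkf (m-1) n t + pkf m (n+1) t + pkf m (n-1) t) / 4
     = ∫ t in (0:ℝ)..Real.pi, (pkf m n t + (if m = 0 then Real.cos (n * t) / 2 else 0)) := by
    apply intervalIntegral.integral_congr_ae
    filter_upwards with t ht
    rw [Set.uIoc_of_le Real.pi_pos.le] at ht
    exact pkf_avg m n ht.1 ht.2
  rw [this, intervalIntegral.integral_add (hi _ _) hc]
  congr 1
  by_cases hm : m = 0
  · by_cases hn : n = 0
    · simp [hm, hn]; ring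
    · simp only [hm, hn, if_true, and_false, if_false, mul_zero]
      have hn' : (n:ℝ) ≠ 0 := by exact_mod_cast hn
      rw [intervalIntegral.integral_div, intervalIntegral.integral_comp_mul_left (fun x => Real.cos x) hn']
      simp
  · simp [hm]

lemma pka_zero : pka 0 0 = 0 := by simp [pka, pkf]

lemma pkw_mono {s t : ℝ} (h0 : 0 ≤ s) (hst : s ≤ t) (h1 : t ≤ Real.pi) : pkc s ≤ pkc t ∧ pkw s ≤ pkw t := by
  have hc : pkc s ≤ pkc t := by
    unfold pkc
    linarith [Real.cos_le_cos_of_nonneg_of_le_pi h0 h1 hst]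
  refine ⟨hc, Real.sqrt_le_sqrt ?_⟩
  nlinarith [pkc_ge s]

lemma pkq_anti {s t : ℝ} (h0 : 0 ≤ s) (hst : s ≤ t) (h1 : t ≤ Real.pi) : pkq t ≤ pkq s := by
  have ⟨a, b⟩ := pkw_mono h0 hst h1
  have hs := pkq_mul s
  have ht := pkq_mul t
  have := pkq_pos t
  have := pkq_pos s
  have := pkc_ge s
  have := pkw_nonneg s
  have h3 : pkq s * (pkc s + pkw s) ≤ pkq s * (pkc t + pkw t) := by gcongr
  by_contra hlt
  push Not at hlt
  nlinarith

lemma pkw_inv_sub {t : ℝ} (h0 : 0 < t) (h1 : t ≤ Real.pi) : |1 / pkw t - 1 / t| ≤ 8 := by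
  have hw := pkw_pos h0 h1
  have ht := pkt_le h0.le h1
  have hsq := pkw_sq t
  have hy2 : 1 - Real.cos t ≤ t ^ 2 / 2 := by linarith [Real.one_sub_sq_div_two_le_cos (x := t)]
  have hy0 : 0 ≤ 1 - Real.cos t := by linarith [Real.cos_le_one t]
  have hy1 : t ^ 2 - t ^ 4 ≤ 2 * (1 - Real.cos t) := by
    rcases le_total t 1 with h | h
    · have := Real.cos_bound (x := t) (by rwa [abs_of_pos h0])
      rw [abs_of_pos h0] at this
      have := (abs_le.1 this).2
      nlinarith [pow_pos h0 4]
    · have : t ^ 2 ≤ t ^ 4 := pow_le_pow_right₀ h (by norm_num)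
      linarith
  have hd : pkw t ^ 2 = 2 * (1 - Real.cos t) + (1 - Real.cos t) ^ 2 := by rw [hsq]; unfold pkc; ring
  have hy3 : (1 - Real.cos t) ^ 2 ≤ t ^ 4 := by nlinarith [sq_nonneg (t^2)]
  have hb : |t ^ 2 - pkw t ^ 2| ≤ t ^ 4 := by
    rw [abs_le, hd]; constructor <;> nlinarith [sq_nonneg (1 - Real.cos t)]
  have hsum : 0 < t + pkw t := by positivity
  have e : 1 / pkw t - 1 / t = (t ^ 2 - pkw t ^ 2) / (t * pkw t * (t + pkw t)) := by
    field_simp; ring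
  rw [e, abs_div, abs_of_pos (show 0 < t * pkw t * (t + pkw t) by positivity), div_le_iff₀ (by positivity)]
  refine hb.trans ?_
  have h4 : t ≤ 4 := h1.trans Real.pi_le_four
  have : t * (t/2) * t ≤ t * pkw t * (t + pkw t) := by
    gcongr <;> linarith
  have h5 : t ^ 4 ≤ 4 * t ^ 3 := by nlinarith [pow_pos h0 3]
  nlinarith

lemma pk_osc {g : ℝ → ℝ} {A B : ℝ} {n : ℝ} (hn : 0 < n) (hAB : A ≤ B)
    (hg : AntitoneOn g (Set.Icc A B)) (hg0 : ∀ t ∈ Set.Icc A B, 0 ≤ g t) :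
    |∫ t in A..B, g t * Real.cos (n * t)| ≤ 6 * g A / n := by
  have hpi := Real.pi_le_four
  have hA : A ∈ Set.Icc A B := ⟨le_rfl, hAB⟩
  have hgA := hg0 A hA
  set h := Real.pi / n with hh
  have hhpos : 0 < h := by positivity
  have hgi : ∀ a b, A ≤ a → a ≤ b → b ≤ B → IntervalIntegrable g MeasureTheory.volume a b := by
    intro a b h1 h2 h3
    apply AntitoneOn.intervalIntegrable
    rw [Set.uIcc_of_le h2]
    exact hg.mono (Set.Icc_subset_Icc h1 h3)
  have hci : ∀ a b, A ≤ a → a ≤ b → b ≤ B →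
      IntervalIntegrable (fun t => g t * Real.cos (n * t)) MeasureTheory.volume a b := by
    intro a b h1 h2 h3
    exact (hgi a b h1 h2 h3).mul_continuousOn (by fun_prop)
  have hbd : ∀ a b, A ≤ a → a ≤ b → b ≤ B →
      |∫ t in a..b, g t * Real.cos (n * t)| ≤ g A * (b - a) := by
    intro a b h1 h2 h3
    have := intervalIntegral.norm_integral_le_of_norm_le_const (a := a) (b := b) (C := g A)
      (f := fun t => g t * Real.cos (n * t)) (by
        intro x hx
        rw [Set.uIoc_of_le h2] at hx
        have hx' : x ∈ Set.Icc A B := ⟨by linarith [hx.1], by linarith [hx.2]⟩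
        rw [norm_mul, Real.norm_of_nonneg (hg0 x hx')]
        have c1 : ‖Real.cos (n * x)‖ ≤ 1 := Real.abs_cos_le_one _
        have c2 : g x ≤ g A := hg hA hx' hx'.1
        nlinarith [hg0 x hx', norm_nonneg (Real.cos (n*x))])
    rwa [abs_of_nonneg (by linarith : 0 ≤ b - a)] at this
  have hfin : g A * (3/2 * h) ≤ 6 * g A / n := by
    rw [hh, le_div_iff₀ hn]
    have : g A * (3/2 * (Real.pi / n)) * n = g A * (3/2 * Real.pi) := by field_simp
    rw [this]; nlinarith
  rcases le_total (B - A) h with hs | hs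
  · refine (hbd A B le_rfl hAB le_rfl).trans (le_trans ?_ hfin)
    gcongr; linarith
  · have s1 : ∫ t in (A+h)..B, g t * Real.cos (n*t) = - ∫ t in A..(B-h), g (t+h) * Real.cos (n*t) := by
      rw [← intervalIntegral.integral_neg]
      have := intervalIntegral.integral_comp_add_right (a := A) (b := B - h) (fun t => g t * Real.cos (n*t)) h
      rw [sub_add_cancel] at this
      rw [← this]
      congr 1; ext t
      have : n * (t + h) = n * t + Real.pi := by rw [hh]; field_simp
      rw [this, Real.cos_add_pi]; ring
    have i1 := intervalIntegral.integral_add_adjacent_intervals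
      (hci A (A+h) le_rfl (by linarith) (by linarith)) (hci (A+h) B (by linarith) (by linarith) le_rfl)
    have i2 := intervalIntegral.integral_add_adjacent_intervals
      (hci A (B-h) le_rfl (by linarith) (by linarith)) (hci (B-h) B (by linarith) (by linarith) le_rfl)
    have hshift : IntervalIntegrable (fun t => g (t+h)) MeasureTheory.volume A (B-h) := by
      have := (hgi (A+h) B (by linarith) (by linarith) le_rfl).comp_add_right h
      simpa using this
    have s2 : |(∫ t in A..(B-h), g t * Real.cos (n*t)) - ∫ t in A..(B-h), g (t+h) * Real.cos (n*t)| ≤ g A * h := by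
      rw [← intervalIntegral.integral_sub (hci A (B-h) le_rfl (by linarith) (by linarith))
        (hshift.mul_continuousOn (by fun_prop))]
      have := intervalIntegral.norm_integral_le_of_norm_le (a := A) (b := B-h) (μ := MeasureTheory.volume)
        (f := fun t => g t * Real.cos (n*t) - g (t+h) * Real.cos (n*t)) (g := fun t => g t - g (t+h))
        (by linarith) (by
          filter_upwards with x hx
          have hx1 : x ∈ Set.Icc A B := ⟨hx.1.le, by linarith [hx.2]⟩
          have hx2 : x + h ∈ Set.Icc A B := ⟨by linarith [hx.1], by linarith [hx.2]⟩
          have hm := hg hx1 hx2 (by linarith)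
          rw [← sub_mul, norm_mul, Real.norm_of_nonneg (by linarith)]
          have c1 : ‖Real.cos (n * x)‖ ≤ 1 := Real.abs_cos_le_one _
          nlinarith) ((hgi A (B-h) le_rfl (by linarith) (by linarith)).sub hshift)
      refine this.trans ?_
      rw [intervalIntegral.integral_sub (hgi A (B-h) le_rfl (by linarith) (by linarith)) hshift,
        intervalIntegral.integral_comp_add_right (fun t => g t) h, sub_add_cancel]
      have j1 := intervalIntegral.integral_add_adjacent_intervals
        (hgi A (A+h) le_rfl (by linarith) (by linarith)) (hgi (A+h) B (by linarith) (by linarith) le_rfl)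
      have j2 := intervalIntegral.integral_add_adjacent_intervals
        (hgi A (B-h) le_rfl (by linarith) (by linarith)) (hgi (B-h) B (by linarith) (by linarith) le_rfl)
      have k1 : 0 ≤ ∫ t in (B-h)..B, g t := by
        apply intervalIntegral.integral_nonneg (by linarith)
        intro u hu; exact hg0 u ⟨by linarith [hu.1], hu.2⟩
      have k2 : ∫ t in A..(A+h), g t ≤ g A * h := by
        have := intervalIntegral.integral_mono_on (a := A) (b := A+h) (by linarith)
          (hgi A (A+h) le_rfl (by linarith) (by linarith)) (intervalIntegrable_const (c := g A))
          (by intro x hx; exact hg hA ⟨hx.1, by linarith [hx.2]⟩ hx.1)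
        simpa [mul_comm] using this
      linarith
    have b1 := hbd A (A+h) le_rfl (by linarith) (by linarith)
    have b2 := hbd (B-h) B (by linarith) (by linarith) le_rfl
    rw [show A + h - A = h by ring] at b1
    rw [show B - (B - h) = h by ring] at b2
    rw [abs_le] at b1 b2 s2
    refine le_trans ?_ hfin
    rw [abs_le]
    constructor <;> linarith [b1.1, b1.2, b2.1, b2.2, s2.1, s2.2]

lemma pka_log : ∃ C : ℝ, 0 ≤ C ∧ ∀ m n : ℤ,
    |pka m n - Real.log (max (max |(m:ℝ)| |(n:ℝ)|) 1)| ≤ C := by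
  refine ⟨60, by norm_num, ?_⟩
  intro m n
  set R := max |(m:ℝ)| |(n:ℝ)| with hR
  by_cases h0 : m = 0 ∧ n = 0
  · obtain ⟨rfl, rfl⟩ := h0
    simp [hR, pka_zero]
  have hR1 : 1 ≤ R := by
    rw [hR]
    rcases not_and_or.1 h0 with h | h
    · exact le_max_of_le_left (by exact_mod_cast Int.one_le_abs h)
    · exact le_max_of_le_right (by exact_mod_cast Int.one_le_abs h)
  rw [max_eq_left hR1]
  have hR0 : 0 < R := by linarith
  have hpi3 := Real.pi_gt_three
  have hpi4 := Real.pi_le_four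
  set A := 1 / R with hA
  have hA0 : 0 < A := by positivity
  have hA1 : A ≤ 1 := by rw [hA, div_le_one hR0]; exact hR1
  have hAp : A ≤ Real.pi := by linarith
  have hsplit := intervalIntegral.integral_add_adjacent_intervals
    (pkf_int m n le_rfl hA0.le hAp) (pkf_int m n hA0.le hAp le_rfl)
  have hm : |(m:ℝ)| ≤ R := le_max_left _ _
  have hnR : |(n:ℝ)| ≤ R := le_max_right _ _
  have I1 : |∫ t in (0:ℝ)..A, pkf m n t| ≤ 3 := by
    have := intervalIntegral.norm_integral_le_of_norm_le_const (a := 0) (b := A) (C := 3 * R)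
      (f := pkf m n) (by
        intro x hx
        rw [Set.uIoc_of_le hA0.le] at hx
        rw [Real.norm_of_nonneg (pkf_nonneg _ _ _)]
        have := pkf_le m n hx.1.le (hx.2.trans hAp)
        linarith)
    rw [sub_zero, abs_of_pos hA0, hA] at this
    rw [hA]
    refine this.trans_eq (by field_simp)
  have cinv : ContinuousOn (fun t => 1 / pkw t) (Set.uIcc A Real.pi) := by
    rw [Set.uIcc_of_le hAp]
    apply ContinuousOn.div continuousOn_const pkw_cont.continuousOn
    intro t ht; exact (pkw_pos (by linarith [ht.1]) ht.2).ne'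
  have cqc : ContinuousOn (fun t => (pkq t ^ m.natAbs / pkw t) * Real.cos (n * t)) (Set.uIcc A Real.pi) := by
    rw [Set.uIcc_of_le hAp]
    apply ContinuousOn.mul _ (by fun_prop)
    apply ContinuousOn.div (pkq_cont.pow _).continuousOn pkw_cont.continuousOn
    intro t ht; exact (pkw_pos (by linarith [ht.1]) ht.2).ne'
  have e2 : ∫ t in A..Real.pi, pkf m n t = (∫ t in A..Real.pi, 1 / pkw t)
      - ∫ t in A..Real.pi, (pkq t ^ m.natAbs / pkw t) * Real.cos (n * t) := by
    rw [← intervalIntegral.integral_sub cinv.intervalIntegrable cqc.intervalIntegrable]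
    congr 1; ext t; unfold pkf; ring
  have I2 : |(∫ t in A..Real.pi, 1 / pkw t) - Real.log R| ≤ 40 := by
    have c1 : ContinuousOn (fun t : ℝ => 1 / t) (Set.uIcc A Real.pi) := by
      rw [Set.uIcc_of_le hAp]
      apply ContinuousOn.div continuousOn_const continuousOn_id
      intro t ht; exact (by linarith [ht.1] : (0:ℝ) < t).ne'
    have e3 : ∫ t in A..Real.pi, 1 / t = Real.log Real.pi + Real.log R := by
      rw [integral_one_div_of_pos hA0 Real.pi_pos, hA, div_div_eq_mul_div, div_one,
        Real.log_mul Real.pi_pos.ne' hR0.ne']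
    have e4 := intervalIntegral.norm_integral_le_of_norm_le_const (a := A) (b := Real.pi) (C := 8)
      (f := fun t => 1 / pkw t - 1 / t) (by
        intro x hx
        rw [Set.uIoc_of_le hAp] at hx
        exact pkw_inv_sub (by linarith [hx.1]) hx.2)
    rw [intervalIntegral.integral_sub cinv.intervalIntegrable c1.intervalIntegrable, e3,
      abs_of_nonneg (by linarith : 0 ≤ Real.pi - A)] at e4
    have l1 : 0 ≤ Real.log Real.pi := Real.log_nonneg (by linarith)
    have l2 : Real.log Real.pi ≤ 4 := by linarith [Real.log_le_sub_one_of_pos Real.pi_pos]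
    rw [Real.norm_eq_abs, abs_le] at e4
    rw [abs_le]
    constructor <;> linarith [e4.1, e4.2]
  have I3 : |∫ t in A..Real.pi, (pkq t ^ m.natAbs / pkw t) * Real.cos (n * t)| ≤ 16 := by
    rcases max_choice |(m:ℝ)| |(n:ℝ)| with hmx | hmx
    · rw [← hR] at hmx
      have hna : (m.natAbs : ℝ) = R := by rw [Nat.cast_natAbs, hmx]; simp
      have c2 : ContinuousOn (fun t : ℝ => 4 / R * t ^ (-2:ℤ)) (Set.uIcc A Real.pi) := by
        rw [Set.uIcc_of_le hAp]
        apply ContinuousOn.mul continuousOn_const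
        apply ContinuousOn.zpow₀ continuousOn_id
        intro t ht; left; exact (by linarith [ht.1] : (0:ℝ) < t).ne'
      have := intervalIntegral.norm_integral_le_of_norm_le (a := A) (b := Real.pi) (μ := MeasureTheory.volume)
        (f := fun t => (pkq t ^ m.natAbs / pkw t) * Real.cos (n * t)) (g := fun t => 4 / R * t ^ (-2:ℤ)) hAp (by
          filter_upwards with t ht
          have t0 : 0 < t := by linarith [ht.1]
          have w0 := pkw_pos t0 ht.2
          have q0 := pkq_pos t
          have c1 : ‖Real.cos (n * t)‖ ≤ 1 := Real.abs_cos_le_one _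
          have hq1 : pkq t ^ m.natAbs ≤ 1 / (R * pkw t) := by
            have b1 := one_add_mul_le_pow (a := pkw t) (by linarith) m.natAbs
            rw [hna] at b1
            have b2 : pkq t * (1 + pkw t) ≤ 1 := by
              have := pkq_mul t
              have := pkc_ge t
              nlinarith
            have b3 : (pkq t * (1 + pkw t)) ^ m.natAbs ≤ 1 := pow_le_one₀ (by positivity) b2
            rw [mul_pow] at b3
            rw [le_div_iff₀ (by positivity)]
            have b4 : 0 < pkq t ^ m.natAbs := by positivity
            nlinarith
          rw [norm_mul, Real.norm_of_nonneg (by positivity)]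
          have h1 : pkq t ^ m.natAbs / pkw t ≤ 4 / R * t ^ (-2:ℤ) := by
            rw [div_le_iff₀ w0]
            refine hq1.trans ?_
            have ht2 := pkt_le t0.le ht.2
            rw [zpow_neg, div_le_iff₀ (by positivity)]
            have : 4 / R * ((t ^ (2:ℤ))⁻¹) * pkw t * (R * pkw t) = 4 * pkw t ^ 2 / t ^ 2 := by
              field_simp
            rw [this, le_div_iff₀ (by positivity)]
            nlinarith
          have h2 : 0 ≤ pkq t ^ m.natAbs / pkw t := by positivity
          nlinarith [norm_nonneg (Real.cos (n*t))]) c2.intervalIntegrable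
      refine this.trans ?_
      rw [intervalIntegral.integral_const_mul, integral_zpow (by
        right; refine ⟨by norm_num, ?_⟩
        rw [Set.uIcc_of_le hAp]; intro h; linarith [h.1])]
      have : A ^ (-2 + 1 : ℤ) = R := by rw [hA]; norm_num
      rw [this]
      have hpp : 0 < Real.pi ^ (-2 + 1 : ℤ) := by positivity
      have : (Real.pi ^ (-2 + 1 : ℤ) - R) / (((-2:ℤ):ℝ) + 1) = R - Real.pi ^ (-2 + 1 : ℤ) := by
        push_cast; norm_num; ring
      rw [this, div_mul_eq_mul_div, div_le_iff₀ hR0]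
      linarith
    · rw [← hR] at hmx
      have hcos : ∀ t : ℝ, Real.cos (n * t) = Real.cos (R * t) := by
        intro t
        rw [hmx]
        rcases abs_choice (n:ℝ) with h | h <;> rw [h]
        rw [neg_mul, Real.cos_neg]
      simp only [hcos]
      have := pk_osc (g := fun t => pkq t ^ m.natAbs / pkw t) hR0 hAp (by
        intro s hs t ht hst
        have s0 : 0 < s := by linarith [hs.1]
        have := pkw_pos s0 hs.2
        have := (pkw_mono s0.le hst ht.2).2
        have := pkq_anti s0.le hst ht.2
        have := pkq_pos t
        have := pkq_pos s
        dsimp only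
        gcongr) (by
        intro t ht
        have := pkq_pos t
        have := pkw_nonneg t
        positivity)
      refine this.trans ?_
      have w0 := pkw_pos hA0 hAp
      have hA2 := pkt_le hA0.le hAp
      have : pkq A ^ m.natAbs / pkw A ≤ 2 * R := by
        rw [div_le_iff₀ w0]
        have h7 : pkq A ^ m.natAbs ≤ 1 := pow_le_one₀ (pkq_pos A).le (pkq_le_one A)
        have : R * A = 1 := by rw [hA]; field_simp
        nlinarith
      rw [div_le_iff₀ hR0]
      nlinarith
  have hpk : pka m n = (∫ t in (0:ℝ)..A, pkf m n t) + ∫ t in A..Real.pi, pkf m n t := hsplit.symm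
  rw [hpk, e2]
  rw [abs_le] at I1 I2 I3 ⊢
  constructor <;> linarith [I1.1, I1.2, I2.1, I2.2, I3.1, I3.2]

end PotKernel


noncomputable section DiscPot

def av (f : Vtx → ℝ) (x : Vtx) : ℝ :=
  (f (x.1 + 1, x.2) + f (x.1 - 1, x.2) + f (x.1, x.2 + 1) + f (x.1, x.2 - 1)) / 4

def nbr (x y : Vtx) : Prop :=
  y = (x.1 + 1, x.2) ∨ y = (x.1 - 1, x.2) ∨ y = (x.1, x.2 + 1) ∨ y = (x.1, x.2 - 1)

def Lap (f : Vtx → ℝ) (x : Vtx) : ℝ := 2 / Real.pi * (f x - av f x)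

lemma maxp (D : Finset Vtx) (f : Vtx → ℝ) (M : ℝ) (hsub : ∀ x ∈ D, f x ≤ av f x)
    (hb : ∀ x ∈ D, ∀ y, nbr x y → y ∉ D → f y ≤ M) : ∀ x ∈ D, f x ≤ M := by
  by_contra hcon
  push Not at hcon
  obtain ⟨x0, hx0, hM0⟩ := hcon
  obtain ⟨x, hx, hmax⟩ := D.exists_max_image (fun x => toLex (f x, x.1)) ⟨x0, hx0⟩
  have hle : ∀ y ∈ D, f y ≤ f x := by
    intro y hy
    have := hmax y hy
    rw [Prod.Lex.toLex_le_toLex] at this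
    rcases this with h | h
    · exact h.le
    · exact h.1.le
  have hMx : M < f x := hM0.trans_le (hle x0 hx0)
  have hall : ∀ y, nbr x y → f y ≤ f x := by
    intro y hy
    by_cases hyD : y ∈ D
    · exact hle y hyD
    · exact (hb x hx y hy hyD).trans hMx.le
  have h1 := hall (x.1 + 1, x.2) (Or.inl rfl)
  have h2 := hall (x.1 - 1, x.2) (Or.inr (Or.inl rfl))
  have h3 := hall (x.1, x.2 + 1) (Or.inr (Or.inr (Or.inl rfl)))
  have h4 := hall (x.1, x.2 - 1) (Or.inr (Or.inr (Or.inr rfl)))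
  have hs := hsub x hx
  unfold av at hs
  have he : f (x.1 + 1, x.2) = f x := by linarith
  by_cases hyD : ((x.1 + 1, x.2) : Vtx) ∈ D
  · have := hmax _ hyD
    rw [Prod.Lex.toLex_le_toLex] at this
    rcases this with h | h
    · simp only at h; linarith
    · simp only at h; linarith [h.2]
  · have := hb x hx _ (Or.inl rfl) hyD
    linarith

def IsGr (D : Finset Vtx) (v : Vtx) (g : Vtx → ℝ) : Prop :=
  (∀ x, x ∉ D → g x = 0) ∧
  ∀ x ∈ D, g x = av g x + Real.pi / 2 * (if x = v then 1 else 0)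

lemma av_sub (f g : Vtx → ℝ) (x : Vtx) : av (f - g) x = av f x - av g x := by
  simp [av]; ring
lemma av_add (f g : Vtx → ℝ) (x : Vtx) : av (f + g) x = av f x + av g x := by
  simp [av]; ring
lemma av_neg (f : Vtx → ℝ) (x : Vtx) : av (-f) x = - av f x := by
  simp [av]; ring
lemma av_smul (c : ℝ) (f : Vtx → ℝ) (x : Vtx) : av (c • f) x = c * av f x := by
  simp [av]; ring
lemma Lp_sub (f g : Vtx → ℝ) (x : Vtx) : Lap (f - g) x = Lap f x - Lap g x := by
  simp [Lap, av_sub]; ring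
lemma Lp_add (f g : Vtx → ℝ) (x : Vtx) : Lap (f + g) x = Lap f x + Lap g x := by
  simp [Lap, av_add]; ring

lemma harm_zero (D : Finset Vtx) (f : Vtx → ℝ) (h0 : ∀ x, x ∉ D → f x = 0)
    (hh : ∀ x ∈ D, f x = av f x) : f = 0 := by
  have h1 := maxp D f 0 (fun x hx => (hh x hx).le) (fun x _ y _ hy => (h0 y hy).le)
  have h2 := maxp D (-f) 0 (fun x hx => by rw [av_neg, ← hh x hx]; rfl)
    (fun x _ y _ hy => by simp [h0 y hy])
  ext x
  by_cases hx : x ∈ D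
  · have := h1 x hx
    have := h2 x hx
    simp at this ⊢; linarith
  · exact h0 x hx

lemma exists_IsGr (D : Finset Vtx) (v : Vtx) : ∃ g, IsGr D v g := by
  let ext0 : (D → ℝ) →ₗ[ℝ] (Vtx → ℝ) :=
    { toFun := fun f x => if h : x ∈ D then f ⟨x, h⟩ else 0
      map_add' := by intro f g; ext x; by_cases h : x ∈ D <;> simp [h]
      map_smul' := by intro c f; ext x; by_cases h : x ∈ D <;> simp [h] }
  let T : (D → ℝ) →ₗ[ℝ] (D → ℝ) :=
    { toFun := fun f x => ext0 f x - av (ext0 f) x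
      map_add' := by
        intro f g; ext x; rw [map_add]; simp [av_add]; ring
      map_smul' := by
        intro c f; ext x; rw [map_smul]; simp [av_smul]; ring }
  have hinj : Function.Injective T := by
    rw [← LinearMap.ker_eq_bot, LinearMap.ker_eq_bot']
    intro f hf
    have hz := harm_zero D (ext0 f) (fun x hx => by simp [ext0, hx]) (fun x hx => by
      have := congrFun hf ⟨x, hx⟩
      simp only [T, LinearMap.coe_mk, AddHom.coe_mk, Pi.zero_apply] at this
      linarith)
    ext x
    have := congrFun hz x
    simpa [ext0] using this
  obtain ⟨f, hf⟩ := (LinearMap.injective_iff_surjective.1 hinj)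
    (fun x => Real.pi / 2 * (if (x : Vtx) = v then 1 else 0))
  refine ⟨ext0 f, fun x hx => by simp [ext0, hx], fun x hx => ?_⟩
  have := congrFun hf ⟨x, hx⟩
  simp only [T, LinearMap.coe_mk, AddHom.coe_mk] at this
  linarith

def gr (D : Finset Vtx) (v : Vtx) : Vtx → ℝ := Classical.choose (exists_IsGr D v)

lemma gr_spec (D : Finset Vtx) (v : Vtx) : IsGr D v (gr D v) := Classical.choose_spec (exists_IsGr D v)

lemma gr_off {D : Finset Vtx} {v x : Vtx} (h : x ∉ D) : gr D v x = 0 := (gr_spec D v).1 x h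

lemma IsGr.eq_gr {D : Finset Vtx} {v : Vtx} {g : Vtx → ℝ} (h : IsGr D v g) : g = gr D v := by
  have := harm_zero D (g - gr D v) (fun x hx => by simp [h.1 x hx, gr_off hx])
    (fun x hx => by
      rw [av_sub, Pi.sub_apply, h.2 x hx, (gr_spec D v).2 x hx]; ring)
  exact sub_eq_zero.1 this

lemma gr_nonneg (D : Finset Vtx) (v x : Vtx) : 0 ≤ gr D v x := by
  by_cases hx : x ∈ D
  · have := maxp D (-gr D v) 0 (fun x hx => by
      rw [av_neg, Pi.neg_apply, (gr_spec D v).2 x hx]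
      have : 0 ≤ Real.pi / 2 * (if x = v then (1:ℝ) else 0) := by
        have := Real.pi_pos
        split_ifs <;> simp; linarith
      linarith)
      (fun x _ y _ hy => by simp [gr_off hy]) x hx
    simpa using this
  · exact (gr_off hx).ge

lemma gr_mono {D0 D : Finset Vtx} (h : D0 ⊆ D) (v x : Vtx) : gr D0 v x ≤ gr D v x := by
  by_cases hx : x ∈ D0
  · have := maxp D0 (gr D0 v - gr D v) 0 (fun x hx => by
      rw [av_sub, Pi.sub_apply, (gr_spec D0 v).2 x hx, (gr_spec D v).2 x (h hx)]; linarith)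
      (fun x _ y _ hy => by simp [gr_off hy, gr_nonneg]) x hx
    simpa using this
  · rw [gr_off hx]; exact gr_nonneg D v x

lemma gr_eq_zero {D : Finset Vtx} {v : Vtx} (h : v ∉ D) : gr D v = 0 := by
  symm; apply IsGr.eq_gr
  refine ⟨fun _ _ => rfl, fun x hx => ?_⟩
  have : x ≠ v := by rintro rfl; exact h hx
  simp [av, this]

def ell (x : Vtx) : ℝ := Real.log (max (max |(x.1:ℝ)| |(x.2:ℝ)|) 1)

lemma ell_nonneg (x : Vtx) : 0 ≤ ell x := Real.log_nonneg (le_max_right _ _)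

lemma ell_zero : ell 0 = 0 := by simp [ell]

lemma ell_sub_comm (x y : Vtx) : ell (x - y) = ell (y - x) := by
  simp only [ell, Prod.fst_sub, Prod.snd_sub, Int.cast_sub]
  rw [abs_sub_comm (x.1:ℝ), abs_sub_comm (x.2:ℝ)]

def Ca : ℝ := Classical.choose pka_log
lemma Ca_nonneg : 0 ≤ Ca := (Classical.choose_spec pka_log).1
def pot (x : Vtx) : ℝ := pka x.1 x.2
lemma pot_ell (x : Vtx) : |pot x - ell x| ≤ Ca := (Classical.choose_spec pka_log).2 x.1 x.2

lemma pot_poisson (v x : Vtx) :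
    pot (x - v) = av (fun y => pot (y - v)) x - Real.pi / 2 * (if x = v then 1 else 0) := by
  have := pka_poisson (x.1 - v.1) (x.2 - v.2)
  have h : (x.1 - v.1 = 0 ∧ x.2 - v.2 = 0) ↔ x = v := by
    rw [sub_eq_zero, sub_eq_zero, Prod.ext_iff]
  simp only [h] at this
  simp only [av, pot, Prod.fst_sub, Prod.snd_sub]
  rw [show x.1 + 1 - v.1 = x.1 - v.1 + 1 by ring, show x.2 + 1 - v.2 = x.2 - v.2 + 1 by ring,
    show x.1 - 1 - v.1 = x.1 - v.1 - 1 by ring, show x.2 - 1 - v.2 = x.2 - v.2 - 1 by ring]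
  linarith

lemma gr_upper {D : Finset Vtx} {v : Vtx} {S : ℝ}
    (hS : ∀ x ∈ D, ∀ y, nbr x y → y ∉ D → ell (y - v) ≤ S) (z : Vtx) :
    gr D v z ≤ max 0 (S - ell (z - v)) + 2 * Ca := by
  have hC := Ca_nonneg
  by_cases hz : z ∈ D
  · have := maxp D (gr D v + fun y => pot (y - v)) (S + Ca) (fun x hx => by
      rw [av_add, Pi.add_apply, (gr_spec D v).2 x hx, pot_poisson v x]; linarith)
      (fun x hx y hy hyD => by
        have h1 := hS x hx y hy hyD
        have h2 := (abs_le.1 (pot_ell (y - v))).2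
        simp only [Pi.add_apply, gr_off hyD]; linarith) z hz
    simp only [Pi.add_apply] at this
    have h2 := (abs_le.1 (pot_ell (z - v))).1
    have := le_max_right 0 (S - ell (z - v))
    linarith
  · rw [gr_off hz]
    have := le_max_left 0 (S - ell (z - v))
    linarith

lemma gr_lower {D : Finset Vtx} {v : Vtx} {S : ℝ}
    (hS : ∀ w, w ∉ D → S ≤ ell (w - v)) (z : Vtx) :
    S - ell (z - v) - 2 * Ca ≤ gr D v z := by
  have hC := Ca_nonneg
  by_cases hz : z ∈ D
  swap
  · rw [gr_off hz]; linarith [hS z hz]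
  have := maxp D (-(gr D v + fun y => pot (y - v))) (-S + Ca) (fun x hx => by
      rw [av_neg, av_add, Pi.neg_apply, Pi.add_apply, (gr_spec D v).2 x hx, pot_poisson v x]; linarith)
      (fun x hx y hy hyD => by
        have h1 := hS y hyD
        have h2 := (abs_le.1 (pot_ell (y - v))).1
        simp only [Pi.neg_apply, Pi.add_apply, gr_off hyD]; linarith) z hz
  simp only [Pi.neg_apply, Pi.add_apply] at this
  have h2 := (abs_le.1 (pot_ell (z - v))).2
  linarith

/-- `D` is well inside `V` -/
def Wd (D V : Finset Vtx) : Prop := ∀ x ∈ D, x ∈ V ∧ ∀ y, nbr x y → y ∈ V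

lemma Wd.mono {D0 D V : Finset Vtx} (h : Wd D V) (hs : D0 ⊆ D) : Wd D0 V := fun x hx => h x (hs hx)

def form (V : Finset Vtx) (f g : Vtx → ℝ) : ℝ := ∑ x ∈ V, f x * Lap g x

lemma sum_shift (V : Finset Vtx) (F : Vtx → ℝ) (e : Vtx) (h1 : ∀ x, F x ≠ 0 → x ∈ V)
    (h2 : ∀ x, F (x + e) ≠ 0 → x ∈ V) : ∑ x ∈ V, F (x + e) = ∑ x ∈ V, F x := by
  have e1 : ∑' x, F x = ∑ x ∈ V, F x :=
    tsum_eq_sum (fun x hx => by by_contra h; exact hx (h1 x h))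
  have e2 : ∑' x, F (x + e) = ∑ x ∈ V, F (x + e) :=
    tsum_eq_sum (fun x hx => by by_contra h; exact hx (h2 x h))
  rw [← e1, ← e2]
  exact (Equiv.addRight e).tsum_eq F

lemma nbr_cases (x : Vtx) : (x.1 + 1, x.2) = x + (1,0) ∧ (x.1 - 1, x.2) = x + (-1,0) ∧
    (x.1, x.2+1) = x + (0,1) ∧ (x.1, x.2-1) = x + (0,-1) := by
  refine ⟨?_, ?_, ?_, ?_⟩ <;> ext <;> simp <;> rfl

def unitv : Finset Vtx := {(1,0), (-1,0), (0,1), (0,-1)}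

lemma unitv_nbr {e x : Vtx} (he : e ∈ unitv) : nbr x (x + e) := by
  simp only [unitv, Finset.mem_insert, Finset.mem_singleton] at he
  obtain ⟨a, b, c, d⟩ := nbr_cases x
  unfold nbr
  rw [a, b, c, d]
  rcases he with rfl | rfl | rfl | rfl <;> simp

lemma unitv_nbr' {e x : Vtx} (he : e ∈ unitv) : nbr (x + e) x := by
  have : -e ∈ unitv := by
    simp only [unitv, Finset.mem_insert, Finset.mem_singleton] at he ⊢
    rcases he with rfl | rfl | rfl | rfl <;> simp
  simpa using unitv_nbr (x := x + e) this

lemma av_eq (f : Vtx → ℝ) (x : Vtx) : av f x = (∑ e ∈ unitv, f (x + e)) / 4 := by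
  obtain ⟨a, b, c, d⟩ := nbr_cases x
  unfold av unitv
  rw [a, b, c, d, Finset.sum_insert (by simp), Finset.sum_insert (by simp), Finset.sum_insert (by simp),
    Finset.sum_singleton]
  ring

lemma nbr_symm {x y : Vtx} (h : nbr x y) : nbr y x := by
  unfold nbr at *
  rcases h with rfl | rfl | rfl | rfl <;> simp

lemma sum_unitv_neg (F : Vtx → ℝ) : ∑ e ∈ unitv, F (-e) = ∑ e ∈ unitv, F e := by
  unfold unitv
  repeat rw [Finset.sum_insert (by simp)]
  simp
  ring

lemma sum_shift_D {D V : Finset Vtx} (hD : Wd D V) (F : Vtx → ℝ) (hF : ∀ x, x ∉ D → F x = 0)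
    {e : Vtx} (he : e ∈ unitv) : ∑ x ∈ V, F (x + e) = ∑ x ∈ V, F x := by
  apply sum_shift
  · intro x hx
    by_contra h
    exact hx (hF x (fun h' => h (hD x h').1))
  · intro x hx
    have : x + e ∈ D := by by_contra h; exact hx (hF _ h)
    exact (hD _ this).2 x (unitv_nbr' he)

lemma sum_av {D V : Finset Vtx} (hD : Wd D V) (F : Vtx → ℝ) (hF : ∀ x, x ∉ D → F x = 0) :
    ∑ x ∈ V, av F x = ∑ x ∈ V, F x := by
  simp only [av_eq]
  rw [← Finset.sum_div, Finset.sum_comm, Finset.sum_congr rfl (fun e he => sum_shift_D hD F hF he)]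
  simp [unitv]

lemma form_symm {D V : Finset Vtx} (hD : Wd D V) {f g : Vtx → ℝ} (hf : ∀ x, x ∉ D → f x = 0)
    (hg : ∀ x, x ∉ D → g x = 0) : form V f g = form V g f := by
  unfold form Lap
  have key : ∑ x ∈ V, f x * av g x = ∑ x ∈ V, g x * av f x := by
    simp only [av_eq, mul_div_assoc', Finset.mul_sum]
    rw [← Finset.sum_div, ← Finset.sum_div, Finset.sum_comm]
    conv_rhs => rw [Finset.sum_comm]
    congr 1
    rw [← sum_unitv_neg (fun e => ∑ x ∈ V, g x * f (x + e))]
    apply Finset.sum_congr rfl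
    intro e he
    rw [← sum_shift V (fun x => g x * f (x + -e)) e]
    · apply Finset.sum_congr rfl; intro x _; rw [add_neg_cancel_right]; ring
    · intro x hx
      by_contra h
      exact hx (by rw [hg x (fun h' => h (hD x h').1)]; simp)
    · intro x hx
      by_contra h
      exact hx (by
        rw [add_neg_cancel_right, hf x (fun h' => h (hD x h').1)]; simp)
  have e1 : ∀ f g : Vtx → ℝ, ∑ x ∈ V, f x * (2 / Real.pi * (g x - av g x)) =
      2 / Real.pi * (∑ x ∈ V, f x * g x - ∑ x ∈ V, f x * av g x) := by
    intro f g
    rw [← Finset.sum_sub_distrib, Finset.mul_sum]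
    apply Finset.sum_congr rfl; intro x _; ring
  rw [e1, e1, key]
  congr 2
  apply Finset.sum_congr rfl; intro x _; ring

lemma form_nonneg {D V : Finset Vtx} (hD : Wd D V) {f : Vtx → ℝ} (hf : ∀ x, x ∉ D → f x = 0) :
    0 ≤ form V f f := by
  unfold form Lap
  have h := sum_av hD (fun x => f x ^ 2) (fun x hx => by simp [hf x hx])
  have h2 : ∑ x ∈ V, f x * av f x ≤ ∑ x ∈ V, (f x ^ 2 / 2 + av (fun x => f x ^ 2) x / 2) := by
    apply Finset.sum_le_sum
    intro x _
    unfold av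
    nlinarith [sq_nonneg (f x - f (x.1+1,x.2)), sq_nonneg (f x - f (x.1-1,x.2)),
      sq_nonneg (f x - f (x.1,x.2+1)), sq_nonneg (f x - f (x.1,x.2-1))]
  rw [Finset.sum_add_distrib, ← Finset.sum_div, ← Finset.sum_div, h] at h2
  have : ∑ x ∈ V, f x * (2 / Real.pi * (f x - av f x)) =
      2 / Real.pi * (∑ x ∈ V, f x ^ 2 - ∑ x ∈ V, f x * av f x) := by
    rw [← Finset.sum_sub_distrib, Finset.mul_sum]
    apply Finset.sum_congr rfl; intro x _; ring
  rw [this]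
  have := Real.pi_pos
  apply mul_nonneg (by positivity)
  linarith

lemma Lp_gr_in {D : Finset Vtx} {v x : Vtx} (hx : x ∈ D) : Lap (gr D v) x = if x = v then 1 else 0 := by
  unfold Lap
  rw [(gr_spec D v).2 x hx]
  have := Real.pi_pos.ne'
  split_ifs <;> simp

lemma av_gr_nonneg (D : Finset Vtx) (v x : Vtx) : 0 ≤ av (gr D v) x := by
  unfold av
  have := gr_nonneg D v
  have h1 := this (x.1+1,x.2)
  have h2 := this (x.1-1,x.2)
  have h3 := this (x.1,x.2+1)
  have h4 := this (x.1,x.2-1)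
  linarith

lemma Lp_gr_out {D : Finset Vtx} {v x : Vtx} (hx : x ∉ D) : Lap (gr D v) x ≤ 0 := by
  unfold Lap
  rw [gr_off hx]
  have := av_gr_nonneg D v x
  have := Real.pi_pos
  apply mul_nonpos_of_nonneg_of_nonpos (by positivity)
  linarith

lemma Lp_gr_far {D : Finset Vtx} {v x : Vtx} (hx : x ∉ D) (hn : ∀ y, nbr x y → y ∉ D) :
    Lap (gr D v) x = 0 := by
  unfold Lap
  rw [gr_off hx, av_eq, Finset.sum_eq_zero]
  · simp
  · intro e he; exact gr_off (hn _ (unitv_nbr he))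

lemma form_gr_eq {D V : Finset Vtx} (hD : Wd D V) {f : Vtx → ℝ} (hf : ∀ x, x ∉ D → f x = 0) (v : Vtx) :
    form V f (gr D v) = f v := by
  unfold form
  by_cases hv : v ∈ D
  · rw [Finset.sum_eq_single v]
    · rw [Lp_gr_in hv]; simp
    · intro x _ hx
      by_cases hxD : x ∈ D
      · rw [Lp_gr_in hxD, if_neg hx, mul_zero]
      · rw [hf x hxD, zero_mul]
    · intro h; exact absurd (hD v hv).1 h
  · rw [gr_eq_zero hv, hf v hv]
    simp [Lap, av]

lemma form_gr_le {D V : Finset Vtx} (hD : Wd D V) {f : Vtx → ℝ} (hf : ∀ x, 0 ≤ f x) (v : Vtx) :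
    form V f (gr D v) ≤ f v := by
  unfold form
  by_cases hv : v ∈ D
  · rw [← Finset.sum_erase_add V _ (hD v hv).1, Lp_gr_in hv]
    have : ∑ x ∈ V.erase v, f x * Lap (gr D v) x ≤ 0 := by
      apply Finset.sum_nonpos
      intro x hx
      have hxv := (Finset.mem_erase.1 hx).1
      by_cases hxD : x ∈ D
      · rw [Lp_gr_in hxD, if_neg hxv, mul_zero]
      · exact mul_nonpos_of_nonneg_of_nonpos (hf x) (Lp_gr_out hxD)
    simp; linarith
  · rw [gr_eq_zero hv]
    simp [Lap, av, hf]

lemma sum_Lp {D V : Finset Vtx} (hD : Wd D V) {f : Vtx → ℝ} (hf : ∀ x, x ∉ D → f x = 0) :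
    ∑ x ∈ V, Lap f x = 0 := by
  unfold Lap
  rw [← Finset.mul_sum, Finset.sum_sub_distrib, sum_av hD f hf, sub_self, mul_zero]

lemma form_gr_ge {D V : Finset Vtx} (hD : Wd D V) {f : Vtx → ℝ} {v : Vtx} {S : ℝ}
    (hS : ∀ x, x ∉ D → (x = v ∨ ∃ y ∈ D, nbr x y) → f x ≤ S) :
    f v - S ≤ form V f (gr D v) := by
  by_cases hv : v ∈ D
  · have h0 := sum_Lp hD (f := gr D v) (fun x hx => gr_off hx)
    have : form V f (gr D v) = ∑ x ∈ V, (f x - S) * Lap (gr D v) x := by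
      unfold form
      simp only [sub_mul]
      rw [Finset.sum_sub_distrib, ← Finset.mul_sum, h0, mul_zero, sub_zero]
    rw [this, ← Finset.sum_erase_add V _ (hD v hv).1, Lp_gr_in hv]
    have : 0 ≤ ∑ x ∈ V.erase v, (f x - S) * Lap (gr D v) x := by
      apply Finset.sum_nonneg
      intro x hx
      have hxv := (Finset.mem_erase.1 hx).1
      by_cases hxD : x ∈ D
      · rw [Lp_gr_in hxD, if_neg hxv, mul_zero]
      · by_cases hn : ∃ y ∈ D, nbr x y
        · exact mul_nonneg_of_nonpos_of_nonpos (by linarith [hS x hxD (Or.inr hn)]) (Lp_gr_out hxD)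
        · push Not at hn
          rw [Lp_gr_far hxD (fun y hy hyD => hn y hyD hy), mul_zero]
    simp; linarith
  · rw [gr_eq_zero hv]
    have := hS v hv (Or.inl rfl)
    simp [form, Lap, av]; linarith

lemma form_add_right (V : Finset Vtx) (f g h : Vtx → ℝ) : form V f (g + h) = form V f g + form V f h := by
  simp [form, Lp_add, mul_add, Finset.sum_add_distrib]
lemma form_sub_right (V : Finset Vtx) (f g h : Vtx → ℝ) : form V f (g - h) = form V f g - form V f h := by
  simp [form, Lp_sub, mul_sub, Finset.sum_sub_distrib]
lemma form_add_left (V : Finset Vtx) (f g h : Vtx → ℝ) : form V (f + g) h = form V f h + form V g h := by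
  simp [form, add_mul, Finset.sum_add_distrib]
lemma form_sub_left (V : Finset Vtx) (f g h : Vtx → ℝ) : form V (f - g) h = form V f h - form V g h := by
  simp [form, sub_mul, Finset.sum_sub_distrib]

end DiscPot


noncomputable section GreenEst

def nm (x : Vtx) : ℝ := max (max |(x.1:ℝ)| |(x.2:ℝ)|) 1

lemma nm_ge_one (x : Vtx) : 1 ≤ nm x := le_max_right _ _
lemma nm_pos (x : Vtx) : 0 < nm x := lt_of_lt_of_le one_pos (nm_ge_one x)
lemma ell_eq (x : Vtx) : ell x = Real.log (nm x) := rfl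

lemma nm_le_iff {x : Vtx} {r : ℝ} (hr : 1 ≤ r) : nm x ≤ r ↔ |(x.1:ℝ)| ≤ r ∧ |(x.2:ℝ)| ≤ r := by
  simp [nm, hr]

lemma nm_tri (x y : Vtx) : nm (x + y) ≤ nm x + nm y := by
  have h1 := nm_ge_one x
  have h2 := nm_ge_one y
  rw [nm_le_iff (by linarith)]
  have a := (nm_le_iff h1).1 le_rfl
  have b := (nm_le_iff h2).1 le_rfl
  simp only [Prod.fst_add, Prod.snd_add, Int.cast_add]
  exact ⟨(abs_add_le _ _).trans (add_le_add a.1 b.1), (abs_add_le _ _).trans (add_le_add a.2 b.2)⟩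

lemma nm_neg (x : Vtx) : nm (-x) = nm x := by simp [nm]

lemma nm_sub_comm (x y : Vtx) : nm (x - y) = nm (y - x) := by rw [← nm_neg, neg_sub]

lemma nm_tri' (x y z : Vtx) : nm (x - z) ≤ nm (x - y) + nm (y - z) := by
  have := nm_tri (x - y) (y - z)
  rwa [sub_add_sub_cancel] at this

lemma nm_zero : nm 0 = 1 := by simp [nm]

lemma nm_nbr {x y : Vtx} (h : nbr x y) : nm (y - x) = 1 := by
  unfold nbr at h
  rcases h with rfl | rfl | rfl | rfl <;> simp [nm]

lemma nm_nbr_le {x y z : Vtx} (h : nbr x y) : nm (x - z) ≤ nm (y - z) + 1 := by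
  have := nm_tri' x y z
  rw [nm_sub_comm x y, nm_nbr h] at this; linarith

lemma mem_intr {B : Finset Vtx} {x : Vtx} : x ∈ intr B ↔ x ∈ B ∧ ∀ y, nbr x y → y ∈ B := by
  simp only [intr, bdry, Finset.mem_sdiff, Finset.mem_filter, nbr]
  constructor
  · rintro ⟨h1, h2⟩
    have h3 := not_not.1 (fun h => h2 ⟨h1, h⟩)
    refine ⟨h1, ?_⟩
    rintro y (rfl | rfl | rfl | rfl)
    exacts [h3.1, h3.2.1, h3.2.2.1, h3.2.2.2]
  · rintro ⟨h1, h2⟩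
    refine ⟨h1, fun h => h.2 ⟨h2 _ (by simp), h2 _ (by simp), h2 _ (by simp), h2 _ (by simp)⟩⟩

lemma intr_mono {B B' : Finset Vtx} (h : B ⊆ B') : intr B ⊆ intr B' := by
  intro x hx
  rw [mem_intr] at *
  exact ⟨h hx.1, fun y hy => h (hx.2 y hy)⟩

lemma Wd_intr (V : Finset Vtx) : Wd (intr V) V := fun _ hx => mem_intr.1 hx

lemma mem_VN {N : ℕ} {x : Vtx} : x ∈ VN N ↔ (0 ≤ x.1 ∧ x.1 ≤ N) ∧ (0 ≤ x.2 ∧ x.2 ≤ N) := by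
  simp [VN, Finset.mem_Icc, Prod.le_def]; tauto

lemma rN_eq {N : ℕ} (hN : 1 ≤ N) (s : ℝ) : (N:ℝ) ^ s = Real.exp (s * Real.log N) := by
  rw [Real.rpow_def_of_pos (by positivity)]; ring_nf

lemma rN_ge {N : ℕ} (hN : 1 ≤ N) {s : ℝ} (hs : 0 ≤ s) : 1 ≤ (N:ℝ) ^ s :=
  Real.one_le_rpow (by exact_mod_cast hN) hs

lemma log_rN {N : ℕ} (hN : 1 ≤ N) (s : ℝ) : Real.log ((N:ℝ) ^ s) = s * Real.log N :=
  Real.log_rpow (by positivity) _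

lemma nbhd_sub {N : ℕ} {v : Vtx} (hv : v ∈ VN N) (lam : ℝ) : nbhd N lam v ⊆ VN N := by
  unfold nbhd
  split_ifs
  · exact subset_rfl
  · simpa using hv
  · exact Finset.filter_subset _ _

lemma mem_nbhd {N : ℕ} {v w : Vtx} (hv : v ∈ VN N) {lam : ℝ} (h0 : lam ≠ 0) :
    w ∈ nbhd N lam v ↔ w ∈ VN N ∧ |(w.1 : ℝ) - (v.1 : ℝ)| ≤ (N : ℝ) ^ ((1 : ℝ) - lam) / 2 ∧
    |(w.2 : ℝ) - (v.2 : ℝ)| ≤ (N : ℝ) ^ ((1 : ℝ) - lam) / 2 := by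
  unfold nbhd
  rw [if_neg h0]
  split_ifs with h1
  · subst h1
    simp only [Finset.mem_singleton, sub_self, Real.rpow_zero]
    constructor
    · rintro rfl; simp [hv]
    · rintro ⟨_, h1, h2⟩
      have e : ∀ a b : ℤ, |(a:ℝ) - b| ≤ 1 / 2 → a = b := by
        intro a b h
        have : |a - b| < 1 := by
          have : (|a - b| : ℝ) < 1 := by linarith
          exact_mod_cast this
        rw [Int.abs_lt_one_iff] at this; omega
      exact Prod.ext (e _ _ h1) (e _ _ h2)
  · simp

lemma nbhd_nm {N : ℕ} (hN : 1 ≤ N) {v w : Vtx} (hv : v ∈ VN N) {lam : ℝ} (h1 : lam ≤ 1)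
    (hw : w ∈ nbhd N lam v) : nm (w - v) ≤ (N:ℝ) ^ (1 - lam) := by
  have hr := rN_ge hN (sub_nonneg.2 h1)
  rw [nm_le_iff hr]
  simp only [Prod.fst_sub, Prod.snd_sub, Int.cast_sub]
  by_cases h0 : lam = 0
  · subst h0
    have hw' := mem_VN.1 (nbhd_sub hv _ hw)
    have hv' := mem_VN.1 hv
    simp only [sub_zero, Real.rpow_one]
    have e : ∀ a b : ℤ, 0 ≤ a → a ≤ N → 0 ≤ b → b ≤ N → |(a:ℝ) - b| ≤ N := by
      intro a b h1 h2 h3 h4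
      have : |a - b| ≤ N := by rw [abs_le]; omega
      exact_mod_cast this
    exact ⟨e _ _ hw'.1.1 hw'.1.2 hv'.1.1 hv'.1.2, e _ _ hw'.2.1 hw'.2.2 hv'.2.1 hv'.2.2⟩
  · rw [mem_nbhd hv h0] at hw
    exact ⟨by linarith [hw.2.1], by linarith [hw.2.2]⟩

lemma nbhd_ell {N : ℕ} (hN : 1 ≤ N) {v w : Vtx} (hv : v ∈ VN N) {lam : ℝ} (h1 : lam ≤ 1)
    (hw : w ∈ nbhd N lam v) : ell (w - v) ≤ (1 - lam) * Real.log N := by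
  rw [ell_eq, ← log_rN hN]
  exact Real.log_le_log (nm_pos _) (nbhd_nm hN hv h1 hw)

def Dl (N : ℕ) (v : Vtx) (lam : ℝ) : Finset Vtx := intr (nbhd N lam v)

lemma Dl_sub {N : ℕ} {v : Vtx} (hv : v ∈ VN N) (lam : ℝ) : Dl N v lam ⊆ intr (VN N) :=
  intr_mono (nbhd_sub hv lam)

lemma Wd_Dl {N : ℕ} {v : Vtx} (hv : v ∈ VN N) (lam : ℝ) : Wd (Dl N v lam) (VN N) :=
  (Wd_intr _).mono (Dl_sub hv lam)

lemma Dl_bd {N : ℕ} (hN : 1 ≤ N) {v : Vtx} (hv : v ∈ VN N) {lam : ℝ} (h1 : lam ≤ 1) :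
    ∀ x ∈ Dl N v lam, ∀ y, nbr x y → y ∉ Dl N v lam → ell (y - v) ≤ (1 - lam) * Real.log N :=
  fun _ hx y hy _ => nbhd_ell hN hv h1 ((mem_intr.1 hx).2 y hy)

lemma nbhd_anti {N : ℕ} (hN : 1 ≤ N) {v : Vtx} (hv : v ∈ VN N) {l l' : ℝ} (h0 : 0 ≤ l) (h : l ≤ l') :
    nbhd N l' v ⊆ nbhd N l v := by
  by_cases hl : l = 0
  · subst hl
    have : nbhd N 0 v = VN N := by simp [nbhd]
    rw [this]; exact nbhd_sub hv _
  · have hl' : l' ≠ 0 := by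
      intro h'; apply hl; linarith
    intro w hw
    rw [mem_nbhd hv hl'] at hw
    rw [mem_nbhd hv hl]
    have : (N:ℝ) ^ (1 - l') ≤ (N:ℝ) ^ (1 - l) :=
      Real.rpow_le_rpow_of_exponent_le (by exact_mod_cast hN) (by linarith)
    exact ⟨hw.1, by linarith [hw.2.1], by linarith [hw.2.2]⟩

lemma Dl_anti {N : ℕ} (hN : 1 ≤ N) {v : Vtx} (hv : v ∈ VN N) {l l' : ℝ} (h0 : 0 ≤ l) (h : l ≤ l') :
    Dl N v l' ⊆ Dl N v l := intr_mono (nbhd_anti hN hv h0 h)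

lemma not_intr {B : Finset Vtx} {w : Vtx} (h : w ∉ intr B) :
    ∃ w', w' ∉ B ∧ (w' = w ∨ nbr w w') := by
  rw [mem_intr] at h
  by_cases hw : w ∈ B
  · have : ¬ ∀ y, nbr w y → y ∈ B := fun h' => h ⟨hw, h'⟩
    push Not at this
    obtain ⟨y, hy, hyB⟩ := this
    exact ⟨y, hyB, Or.inr hy⟩
  · exact ⟨w, hw, Or.inl rfl⟩

lemma far_of_not_nbhd {N : ℕ} {v w : Vtx} (hv : v ∈ VN N) {lam : ℝ}
    (hw : w ∈ VN N) (hn : w ∉ nbhd N lam v) : (N:ℝ) ^ (1 - lam) / 2 ≤ nm (w - v) := by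
  have h0 : lam ≠ 0 := by
    rintro rfl; apply hn; simpa [nbhd] using hw
  rw [mem_nbhd hv h0] at hn
  by_contra hcon
  push Not at hcon
  apply hn
  have := (nm_le_iff (nm_ge_one (w - v))).1 le_rfl
  simp only [Prod.fst_sub, Prod.snd_sub, Int.cast_sub] at this
  exact ⟨hw, by linarith [this.1], by linarith [this.2]⟩

lemma AN_far {N : ℕ} {v z : Vtx} {ρ : ℝ} (hv : v ∈ AN N ρ) (hz : z ∉ VN N) :
    (N:ℝ) ^ (1 - ρ) / 2 ≤ nm (z - v) := by
  have h := (Finset.mem_filter.1 hv).2 z hz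
  have := (nm_le_iff (nm_ge_one (z - v))).1 le_rfl
  have hp := nm_pos (z - v)
  simp only [Prod.fst_sub, Prod.snd_sub, Int.cast_sub] at this
  have h2 : Real.sqrt (((v.1 : ℝ) - (z.1 : ℝ)) ^ 2 + ((v.2 : ℝ) - (z.2 : ℝ)) ^ 2) ≤ 2 * nm (z - v) := by
    rw [Real.sqrt_le_left (by linarith)]
    have a := sq_le_sq' (abs_le.1 this.1).1 (abs_le.1 this.1).2
    have b := sq_le_sq' (abs_le.1 this.2).1 (abs_le.1 this.2).2
    nlinarith
  linarith

lemma AN_sub {N : ℕ} {ρ : ℝ} {v : Vtx} (hv : v ∈ AN N ρ) : v ∈ VN N := (Finset.mem_filter.1 hv).1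

lemma ell_ge_of {N : ℕ} (hN : 1 ≤ N) {s c : ℝ} (hc : 0 < c) {x : Vtx} (h : (N:ℝ) ^ s / c ≤ nm x) :
    s * Real.log N - Real.log c ≤ ell x := by
  have hp : 0 < (N:ℝ) ^ s := Real.rpow_pos_of_pos (by positivity) _
  rw [ell_eq, ← log_rN hN, ← Real.log_div hp.ne' hc.ne']
  exact Real.log_le_log (by positivity) h

lemma nm_half {w w' v : Vtx} (h : w' = w ∨ nbr w w') : nm (w' - v) / 2 ≤ nm (w - v) := by
  have := nm_ge_one (w - v)
  rcases h with rfl | h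
  · linarith
  · have := nm_nbr_le (z := v) (nbr_symm h); linarith

lemma Dl_in_far {N : ℕ} (hN : 1 ≤ N) {v w : Vtx} (hv : v ∈ VN N) {lam : ℝ}
    (hw : w ∈ intr (VN N)) (hn : w ∉ Dl N v lam) :
    (1 - lam) * Real.log N - Real.log 4 ≤ ell (w - v) := by
  obtain ⟨w', hw', hr⟩ := not_intr hn
  have hV : w' ∈ VN N := by
    rcases hr with rfl | hr
    · exact (mem_intr.1 hw).1
    · exact (mem_intr.1 hw).2 _ hr
  apply ell_ge_of hN (by norm_num)
  have := far_of_not_nbhd hv hV hw'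
  have := nm_half (v := v) hr
  linarith

lemma Dl_far {N : ℕ} (hN : 1 ≤ N) {v w : Vtx} {ρ : ℝ} (hv : v ∈ AN N ρ) (hρ : 0 ≤ ρ) {lam : ℝ} (h0 : 0 ≤ lam)
    (hn : w ∉ Dl N v lam) :
    (1 - lam) * Real.log N - ρ * Real.log N - Real.log 4 ≤ ell (w - v) := by
  have hL : 0 ≤ Real.log N := Real.log_natCast_nonneg N
  by_cases hw : w ∈ intr (VN N)
  · have := Dl_in_far hN (AN_sub hv) hw hn
    nlinarith
  · obtain ⟨w', hw', hr⟩ := not_intr hw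
    have := ell_ge_of hN (s := 1 - ρ) (c := 4) (by norm_num) (x := w - v) (by
      have := AN_far hv hw'
      have := nm_half (v := v) hr
      linarith)
    nlinarith

def KK (N : ℕ) (v : Vtx) (l : ℝ) (v' : Vtx) (l' : ℝ) : ℝ :=
  form (VN N) (gr (Dl N v l) v) (gr (Dl N v' l') v')

lemma gr_Dl_off {N : ℕ} {v : Vtx} (hv : v ∈ VN N) {l : ℝ} {x : Vtx} (hx : x ∉ intr (VN N)) :
    gr (Dl N v l) v x = 0 := gr_off (fun h => hx (Dl_sub hv l h))

lemma KK_symm {N : ℕ} {v v' : Vtx} (hv : v ∈ VN N) (hv' : v' ∈ VN N) (l l' : ℝ) :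
    KK N v l v' l' = KK N v' l' v l :=
  form_symm (Wd_intr _) (fun _ hx => gr_Dl_off hv hx) (fun _ hx => gr_Dl_off hv' hx)

lemma grDl_upper {N : ℕ} (hN : 1 ≤ N) {v : Vtx} (hv : v ∈ VN N) {l : ℝ} (h1 : l ≤ 1) (z : Vtx) :
    gr (Dl N v l) v z ≤ max 0 ((1 - l) * Real.log N - ell (z - v)) + 2 * Ca :=
  gr_upper (Dl_bd hN hv h1) z

lemma KK_upper {N : ℕ} (hN : 1 ≤ N) {v v' : Vtx} (hv : v ∈ VN N) (hv' : v' ∈ VN N) {l l' : ℝ}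
    (h1 : l' ≤ 1) :
    KK N v l v' l' ≤ max 0 ((1 - l') * Real.log N - ell (v - v')) + 2 * Ca := by
  rw [KK_symm hv hv']
  exact (form_gr_le (Wd_Dl hv l) (gr_nonneg _ _) v).trans (grDl_upper hN hv' h1 v)

lemma log4_nonneg : 0 ≤ Real.log 4 := Real.log_nonneg (by norm_num)
lemma log16 : Real.log 16 = 2 * Real.log 4 := by
  rw [show (16:ℝ) = 4 ^ 2 by norm_num, Real.log_pow]; norm_num

lemma KK_lower1 {N : ℕ} (hN : 1 ≤ N) {v v' : Vtx} {ρ : ℝ} (hv : v ∈ AN N ρ) (hv' : v' ∈ AN N ρ)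
    (hρ : 0 ≤ ρ) {l l' : ℝ} (h0 : 0 ≤ l) (hl : l ≤ l') (h1 : l' ≤ 1)
    (hc : ell (v - v') ≤ (1 - l) * Real.log N - Real.log 16) :
    max 0 ((1 - l') * Real.log N - ell (v - v')) - ρ * Real.log N - (4 * Ca + 3 * Real.log 4)
      ≤ KK N v l v' l' := by
  have hL : 0 ≤ Real.log N := Real.log_natCast_nonneg N
  have hCa := Ca_nonneg
  have h4 := log4_nonneg
  have hV := AN_sub hv
  have hV' := AN_sub hv'
  rw [KK_symm hV hV']
  have hp : 0 < (N:ℝ) ^ (1 - l) := Real.rpow_pos_of_pos (by positivity) _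
  have key := form_gr_ge (Wd_Dl hV l) (f := gr (Dl N v' l') v') (v := v) (S := Real.log 16 + 2 * Ca) (by
    intro x hx _
    rw [log16]
    by_cases hx' : x ∈ Dl N v' l'
    · have a1 := Dl_in_far hN hV (Dl_sub hV' l' hx') hx
      have a2 : (N:ℝ) ^ (1 - l) / 4 ≤ nm (x - v) := by
        rw [← Real.log_le_log_iff (by positivity) (nm_pos _), Real.log_div hp.ne' (by norm_num), log_rN hN]
        exact a1
      have a3 : nm (v - v') ≤ (N:ℝ) ^ (1 - l) / 16 := by
        rw [← Real.log_le_log_iff (nm_pos _) (by positivity), Real.log_div hp.ne' (by norm_num), log_rN hN]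
        exact hc
      have a4 := nm_tri' x v' v
      rw [nm_sub_comm v' v] at a4
      have a5 := ell_ge_of hN (s := 1 - l) (c := 16) (by norm_num) (x := x - v') (by linarith)
      rw [log16] at a5
      refine (grDl_upper hN hV' h1 x).trans ?_
      have : max 0 ((1 - l') * Real.log N - ell (x - v')) ≤ 2 * Real.log 4 :=
        max_le (by linarith) (by nlinarith)
      linarith
    · rw [gr_off hx']; linarith)
  rw [log16] at key
  have k1 := gr_lower (v := v') (fun w hw => Dl_far hN hv' hρ (h0.trans hl) (w := w) hw) v
  have k2 := gr_nonneg (Dl N v' l') v' v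
  have k3 : max 0 ((1 - l') * Real.log N - ell (v - v')) - ρ * Real.log N - Real.log 4 - 2 * Ca ≤
      gr (Dl N v' l') v' v := by
    have hr : 0 ≤ ρ * Real.log N := mul_nonneg hρ hL
    rcases max_cases 0 ((1 - l') * Real.log N - ell (v - v')) with h | h <;> rw [h.1] <;> linarith
  unfold KK
  linarith

def D0 (N : ℕ) (v : Vtx) (l m : ℝ) : Finset Vtx := (Dl N v l).filter fun x => nm (x - v) < m / 4

lemma D0_sub {N : ℕ} {v : Vtx} {l m : ℝ} : D0 N v l m ⊆ Dl N v l := Finset.filter_subset _ _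

lemma D0_energy {N : ℕ} (hN : 1 ≤ N) {v : Vtx} {ρ : ℝ} (hv : v ∈ AN N ρ)
    (hρ : 0 ≤ ρ) {l m : ℝ} (h0 : 0 ≤ l) (h1 : l ≤ 1) (hm : 1 ≤ m)
    (hc : (1 - l) * Real.log N - Real.log 16 ≤ Real.log m) :
    form (VN N) (gr (Dl N v l) v - gr (D0 N v l m) v) (gr (Dl N v l) v - gr (D0 N v l m) v) ≤
      ρ * Real.log N + 3 * Real.log 4 + 4 * Ca := by
  have hV := AN_sub hv
  have h4 := log4_nonneg
  have hL : 0 ≤ Real.log N := Real.log_natCast_nonneg N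
  have hr : 0 ≤ ρ * Real.log N := mul_nonneg hρ hL
  have W := Wd_Dl hV l
  have W0 := W.mono (D0_sub (m := m))
  have z : ∀ x, x ∉ Dl N v l → gr (D0 N v l m) v x = 0 := fun x hx => gr_off (fun h => hx (D0_sub h))
  have e : form (VN N) (gr (Dl N v l) v - gr (D0 N v l m) v) (gr (Dl N v l) v - gr (D0 N v l m) v) =
      gr (Dl N v l) v v - gr (D0 N v l m) v v := by
    rw [form_sub_left, form_sub_right, form_sub_right, form_gr_eq W (fun x hx => gr_off hx),
      form_gr_eq W z, form_gr_eq W0 (fun x hx => gr_off hx),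
      form_symm W (fun x hx => gr_off hx) z, form_gr_eq W z]
    ring
  rw [e]
  have a := grDl_upper hN hV h1 v
  rw [sub_self, ell_zero, sub_zero, max_eq_right (mul_nonneg (by linarith) hL)] at a
  have b := gr_lower (D := D0 N v l m) (v := v) (S := (1 - l) * Real.log N - ρ * Real.log N - 3 * Real.log 4)
    (by
      intro w hw
      by_cases hw' : w ∈ Dl N v l
      · have : m / 4 ≤ nm (w - v) := by
          by_contra hcon
          exact hw (Finset.mem_filter.2 ⟨hw', not_le.1 hcon⟩)
        have : Real.log (m / 4) ≤ ell (w - v) := Real.log_le_log (by positivity) this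
        rw [Real.log_div (by positivity) (by norm_num)] at this
        rw [log16] at hc
        linarith
      · have := Dl_far hN hv hρ h0 hw'
        linarith) v
  rw [sub_self, ell_zero] at b
  linarith

lemma D0_bd {N : ℕ} {v v' : Vtx} {l : ℝ} {x : Vtx}
    (hx : x = v ∨ ∃ y ∈ D0 N v l (nm (v - v')), nbr x y) :
    ell (v - v') - Real.log 4 ≤ ell (x - v') := by
  have : nm (v - v') / 4 ≤ nm (x - v') := by
    rcases hx with rfl | ⟨y, hy, hn⟩
    · linarith [nm_pos (x - v')]
    · have h1 := (Finset.mem_filter.1 hy).2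
      have h2 := nm_nbr_le (z := v) hn
      have h3 := nm_tri' v x v'
      have h4 := nm_ge_one (y - v)
      rw [nm_sub_comm v x] at h3
      linarith
  rw [ell_eq, ell_eq, ← Real.log_div (nm_pos _).ne' (by norm_num)]
  exact Real.log_le_log (by linarith [nm_pos (v - v')]) this

lemma KK_lower2 {N : ℕ} (hN : 1 ≤ N) {v v' : Vtx} {ρ : ℝ} (hv : v ∈ AN N ρ) (hv' : v' ∈ AN N ρ)
    (hρ : 0 ≤ ρ) {l l' : ℝ} (h0 : 0 ≤ l) (hl : l ≤ l') (h1 : l' ≤ 1)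
    (hc : (1 - l) * Real.log N - Real.log 16 ≤ ell (v - v')) :
    - ρ * Real.log N - (8 * Ca + 9 * Real.log 4) ≤ KK N v l v' l' := by
  have hL : 0 ≤ Real.log N := Real.log_natCast_nonneg N
  have hCa := Ca_nonneg
  have h4 := log4_nonneg
  have hV := AN_sub hv
  have hV' := AN_sub hv'
  have hc' : (1 - l') * Real.log N - Real.log 16 ≤ ell (v - v') := by nlinarith
  set m := nm (v - v') with hm
  have hmm : nm (v' - v) = m := nm_sub_comm _ _
  have E1 := D0_energy hN hv hρ h0 (hl.trans h1) (nm_ge_one (v - v')) hc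
  have E2 := D0_energy hN hv' hρ (h0.trans hl) h1 (nm_ge_one (v - v')) hc'
  rw [← hm] at E1 E2
  set g := gr (Dl N v l) v with hg
  set g' := gr (Dl N v' l') v' with hg'
  set g0 := gr (D0 N v l m) v with hg0
  set g0' := gr (D0 N v' l' m) v' with hg0'
  have W := Wd_intr (VN N)
  have zg : ∀ x, x ∉ intr (VN N) → g x = 0 := fun x hx => gr_Dl_off hV hx
  have zg' : ∀ x, x ∉ intr (VN N) → g' x = 0 := fun x hx => gr_Dl_off hV' hx
  have zg0 : ∀ x, x ∉ intr (VN N) → g0 x = 0 := fun x hx => gr_off (fun h => hx (Dl_sub hV l (D0_sub h)))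
  have zg0' : ∀ x, x ∉ intr (VN N) → g0' x = 0 := fun x hx => gr_off (fun h => hx (Dl_sub hV' l' (D0_sub h)))
  have zh : ∀ x, x ∉ intr (VN N) → (g - g0) x = 0 := fun x hx => by simp [zg x hx, zg0 x hx]
  have zh' : ∀ x, x ∉ intr (VN N) → (g' - g0') x = 0 := fun x hx => by simp [zg' x hx, zg0' x hx]
  have e : KK N v l v' l' = form (VN N) g' g0 + form (VN N) (g - g0) g0' +
      form (VN N) (g - g0) (g' - g0') := by
    rw [form_symm W zg' zg0]
    unfold KK
    rw [form_sub_right, form_sub_left, form_sub_left]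
    simp only [← hg, ← hg']
    ring
  have F1 : - (3 * Real.log 4 + 2 * Ca) ≤ form (VN N) g' g0 := by
    have := form_gr_ge ((Wd_Dl hV l).mono (D0_sub (m := m))) (f := g') (v := v) (S := 3 * Real.log 4 + 2 * Ca) (by
      intro x _ hx
      have a := D0_bd (v' := v') hx
      refine (grDl_upper hN hV' h1 x).trans ?_
      rw [log16] at hc'
      have : max 0 ((1 - l') * Real.log N - ell (x - v')) ≤ 3 * Real.log 4 :=
        max_le (by linarith) (by linarith)
      linarith)
    have p := gr_nonneg (Dl N v' l') v' v
    linarith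
  have F2 : - (3 * Real.log 4 + 2 * Ca) ≤ form (VN N) (g - g0) g0' := by
    have := form_gr_ge ((Wd_Dl hV' l').mono (D0_sub (m := m))) (f := g - g0) (v := v')
      (S := 3 * Real.log 4 + 2 * Ca) (by
      intro x _ hx
      rw [← hmm] at hx
      have a := D0_bd (v' := v) hx
      have a0 := grDl_upper hN hV (hl.trans h1) x
      rw [log16] at hc
      rw [ell_sub_comm] at a
      have : max 0 ((1 - l) * Real.log N - ell (x - v)) ≤ 3 * Real.log 4 :=
        max_le (by linarith) (by linarith)
      have p := gr_nonneg (D0 N v l m) v x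
      simp only [Pi.sub_apply, hg, hg0]
      linarith)
    have p : 0 ≤ (g - g0) v' := by
      have := gr_mono (D0_sub (N := N) (v := v) (l := l) (m := m)) v v'
      simp only [Pi.sub_apply]; linarith
    linarith
  have F3 := form_nonneg W (f := (g - g0) + (g' - g0')) (fun x hx => by
    rw [Pi.add_apply, zh x hx, zh' x hx, add_zero])
  rw [form_add_left, form_add_right, form_add_right, form_symm W zh' zh] at F3
  rw [e]
  linarith

lemma KK_main1 {N : ℕ} (hN : 1 ≤ N) {v v' : Vtx} {ρ : ℝ} (hv : v ∈ AN N ρ) (hv' : v' ∈ AN N ρ)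
    (hρ : 0 ≤ ρ) {l l' : ℝ} (h0 : 0 ≤ l) (hl : l ≤ l') (h1 : l' ≤ 1) :
    |KK N v l v' l' - max 0 ((1 - l') * Real.log N - ell (v - v'))| ≤
      (8 * Ca + 11 * Real.log 4) + ρ * Real.log N := by
  have hL : 0 ≤ Real.log N := Real.log_natCast_nonneg N
  have hr : 0 ≤ ρ * Real.log N := mul_nonneg hρ hL
  have hCa := Ca_nonneg
  have h4 := log4_nonneg
  have u := KK_upper hN (AN_sub hv) (AN_sub hv') (l := l) h1
  rw [abs_le]
  refine ⟨?_, by linarith⟩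
  rcases le_total (ell (v - v')) ((1 - l) * Real.log N - Real.log 16) with hc | hc
  · have := KK_lower1 hN hv hv' hρ h0 hl h1 hc
    linarith
  · have := KK_lower2 hN hv hv' hρ h0 hl h1 hc
    rw [log16] at hc
    have : max 0 ((1 - l') * Real.log N - ell (v - v')) ≤ 2 * Real.log 4 :=
        max_le (by linarith) (by nlinarith)
    linarith

lemma bScale_bdd (N : ℕ) (v v' : Vtx) :
    BddAbove {lam : ℝ | lam ∈ Set.Icc (0:ℝ) 1 ∧ ((nbhd N lam v) ∩ (nbhd N lam v')).Nonempty} :=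
  ⟨1, fun _ h => h.1.2⟩

lemma bScale_zero_mem {N : ℕ} {v v' : Vtx} (hv : v ∈ VN N) :
    (0:ℝ) ∈ {lam : ℝ | lam ∈ Set.Icc (0:ℝ) 1 ∧ ((nbhd N lam v) ∩ (nbhd N lam v')).Nonempty} :=
  ⟨by simp, v, by simp [nbhd, hv]⟩

lemma bScale_mem {N : ℕ} {v v' : Vtx} (hv : v ∈ VN N) : 0 ≤ bScale N v v' ∧ bScale N v v' ≤ 1 :=
  ⟨le_csSup (bScale_bdd N v v') (bScale_zero_mem hv), csSup_le ⟨0, bScale_zero_mem hv⟩ (fun _ h => h.1.2)⟩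

lemma bScale_upper {N : ℕ} (hN : 1 ≤ N) {v v' : Vtx} (hv : v ∈ VN N) (hv' : v' ∈ VN N) :
    bScale N v v' * Real.log N ≤ Real.log N - ell (v - v') + Real.log 4 := by
  have h4 := log4_nonneg
  have hL : 0 ≤ Real.log N := Real.log_natCast_nonneg N
  have main : ∀ lam ∈ {lam : ℝ | lam ∈ Set.Icc (0:ℝ) 1 ∧ ((nbhd N lam v) ∩ (nbhd N lam v')).Nonempty},
      lam * Real.log N ≤ Real.log N - ell (v - v') + Real.log 4 := by
    rintro lam ⟨⟨h0, h1⟩, w, hw⟩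
    rw [Finset.mem_inter] at hw
    have a := nbhd_nm hN hv h1 hw.1
    have b := nbhd_nm hN hv' h1 hw.2
    have c := nm_tri' v w v'
    rw [nm_sub_comm v w] at c
    have hp : 0 < (N:ℝ) ^ (1 - lam) := Real.rpow_pos_of_pos (by positivity) _
    have : nm (v - v') ≤ 4 * (N:ℝ) ^ (1 - lam) := by linarith
    have := Real.log_le_log (nm_pos _) this
    rw [Real.log_mul (by norm_num) hp.ne', log_rN hN, ← ell_eq] at this
    linarith
  rcases hL.eq_or_lt with h | h
  · have := main 0 (bScale_zero_mem hv)
    rw [← h] at *; simpa using this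
  · rw [← le_div_iff₀ h]
    apply csSup_le ⟨0, bScale_zero_mem hv⟩
    intro lam hlam
    rw [le_div_iff₀ h]
    exact main lam hlam

lemma bScale_lower {N : ℕ} (hN : 2 ≤ N) {v v' : Vtx} (hv : v ∈ VN N) (hv' : v' ∈ VN N) :
    Real.log N - ell (v - v') - Real.log 4 ≤ bScale N v v' * Real.log N := by
  have h4 := log4_nonneg
  have hL : 0 < Real.log N := Real.log_pos (by exact_mod_cast hN)
  have hb := bScale_mem (v' := v') hv
  by_cases hs : Real.log N - ell (v - v') - Real.log 4 ≤ 0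
  · exact hs.trans (mul_nonneg hb.1 hL.le)
  push Not at hs
  set s := (Real.log N - ell (v - v') - Real.log 4) / Real.log N with hsdef
  have hs0 : 0 < s := div_pos hs hL
  have hs1 : s ≤ 1 := by
    rw [hsdef, div_le_one hL]; linarith [ell_nonneg (v - v')]
  have hsL : s * Real.log N = Real.log N - ell (v - v') - Real.log 4 := div_mul_cancel₀ _ hL.ne'
  rw [← hsL]
  apply mul_le_mul_of_nonneg_right _ hL.le
  apply le_csSup (bScale_bdd N v v')
  refine ⟨⟨hs0.le, hs1⟩, v, ?_⟩
  have hr : (N:ℝ) ^ (1 - s) = 4 * nm (v - v') := by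
    rw [rN_eq (by omega), show (1 - s) * Real.log N = Real.log 4 + ell (v - v') by linarith, Real.exp_add,
      Real.exp_log (by norm_num), ell_eq, Real.exp_log (nm_pos _)]
  have hp := nm_pos (v - v')
  rw [Finset.mem_inter, mem_nbhd hv hs0.ne', mem_nbhd hv' hs0.ne', hr]
  have a := (nm_le_iff (nm_ge_one (v - v'))).1 le_rfl
  simp only [Prod.fst_sub, Prod.snd_sub, Int.cast_sub] at a
  refine ⟨⟨hv, ?_, ?_⟩, hv, ?_, ?_⟩
  · simp; linarith
  · simp; linarith
  · linarith [a.1]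
  · linarith [a.2]

lemma bScale_symm (N : ℕ) (v v' : Vtx) : bScale N v v' = bScale N v' v := by
  unfold bScale; simp only [Finset.inter_comm]

lemma KK_main2 {N : ℕ} (hN : 2 ≤ N) {v v' : Vtx} {ρ : ℝ} (hv : v ∈ AN N ρ) (hv' : v' ∈ AN N ρ)
    (hρ : 0 ≤ ρ) {l l' : ℝ} (h0 : 0 ≤ l) (hl : l ≤ l') (h1 : l' ≤ 1) :
    |KK N v l v' l' - Real.log N * max 0 (bScale N v v' - l')| ≤
      (8 * Ca + 12 * Real.log 4) + ρ * Real.log N := by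
  have hL : 0 ≤ Real.log N := Real.log_natCast_nonneg N
  have a := KK_main1 (by omega) hv hv' hρ h0 hl h1
  have b1 := bScale_upper (by omega) (AN_sub hv) (AN_sub hv')
  have b2 := bScale_lower hN (AN_sub hv) (AN_sub hv')
  have c : |max 0 ((1 - l') * Real.log N - ell (v - v')) - Real.log N * max 0 (bScale N v v' - l')| ≤ Real.log 4 := by
    rw [mul_max_of_nonneg _ _ hL, mul_zero, max_comm 0, max_comm 0]
    refine (abs_max_sub_max_le_abs _ _ _).trans ?_
    rw [abs_le]; constructor <;> linarith
  have := abs_sub_le (KK N v l v' l') (max 0 ((1 - l') * Real.log N - ell (v - v')))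
    (Real.log N * max 0 (bScale N v v' - l'))
  linarith

def CK : ℝ := 8 * Ca + 12 * Real.log 4
lemma CK_nonneg : 0 ≤ CK := by
  unfold CK; linarith [Ca_nonneg, log4_nonneg]

lemma KK_main {N : ℕ} (hN : 2 ≤ N) {v v' : Vtx} {ρ : ℝ} (hv : v ∈ AN N ρ) (hv' : v' ∈ AN N ρ)
    (hρ : 0 ≤ ρ) {l l' : ℝ} (h0 : 0 ≤ l) (h0' : 0 ≤ l') (h1 : l ≤ 1) (h1' : l' ≤ 1) :
    |KK N v l v' l' - Real.log N * max 0 (bScale N v v' - max l l')| ≤ CK + ρ * Real.log N := by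
  rcases le_total l l' with h | h
  · rw [max_eq_right h]; exact KK_main2 hN hv hv' hρ h0 h h1'
  · rw [max_eq_left h, KK_symm (AN_sub hv) (AN_sub hv'), bScale_symm]
    exact KK_main2 hN hv' hv hρ h0' h h1

end GreenEst


noncomputable section GFFProb
open MeasureTheory ProbabilityTheory

def lin (N : ℕ) (c : Vtx → ℝ) (ω : FieldSp) : ℝ := ∑ v ∈ VN N, c v * ω v

lemma lin_meas (N : ℕ) (c : Vtx → ℝ) : Measurable (lin N c) := by
  unfold lin; fun_prop

lemma lin_add (N : ℕ) (c d : Vtx → ℝ) : lin N (c + d) = lin N c + lin N d := by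
  ext ω; simp [lin, add_mul, Finset.sum_add_distrib]
lemma lin_sub (N : ℕ) (c d : Vtx → ℝ) : lin N (c - d) = lin N c - lin N d := by
  ext ω; simp [lin, sub_mul, Finset.sum_sub_distrib]
lemma lin_smul (N : ℕ) (a : ℝ) (c : Vtx → ℝ) : lin N (a • c) = a • lin N c := by
  ext ω; simp [lin, mul_assoc, Finset.mul_sum]

lemma lin_single {N : ℕ} {u : Vtx} (hu : u ∈ VN N) : lin N (Pi.single u 1) = fun ω => ω u := by
  ext ω
  unfold lin
  rw [Finset.sum_eq_single u]
  · simp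
  · intro b _ hb; simp [hb]
  · intro h; exact absurd hu h

def GV (N : ℕ) (x y : Vtx) : ℝ := gr (intr (VN N)) y x

lemma GV_symm (N : ℕ) (x y : Vtx) : GV N x y = GV N y x := by
  have W := Wd_intr (VN N)
  have a := form_gr_eq W (f := gr (intr (VN N)) y) (fun _ h => gr_off h) x
  have b := form_gr_eq W (f := gr (intr (VN N)) x) (fun _ h => gr_off h) y
  unfold GV
  rw [← a, ← b]
  exact form_symm W (fun _ h => gr_off h) (fun _ h => gr_off h)

def BF (N : ℕ) (c d : Vtx → ℝ) : ℝ := ∑ v ∈ VN N, ∑ w ∈ VN N, c v * d w * GV N v w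

lemma green_eq {N : ℕ} {G : Vtx → Vtx → ℝ} (h : IsGreenFn (VN N) G) (x y : Vtx) : G x y = GV N x y := by
  unfold GV
  by_cases hy : y ∈ intr (VN N)
  · have : IsGr (intr (VN N)) y (fun x => G x y) := ⟨fun x hx => h.1 x y (Or.inl hx), fun x hx => h.2 y hy x hx⟩
    exact congrFun this.eq_gr x
  · rw [gr_eq_zero hy, h.1 x y (Or.inr hy)]; rfl

lemma BF_symm (N : ℕ) (c d : Vtx → ℝ) : BF N c d = BF N d c := by
  unfold BF
  rw [Finset.sum_comm]
  apply Finset.sum_congr rfl; intro v _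
  apply Finset.sum_congr rfl; intro w _
  rw [GV_symm]; ring

lemma BF_add (N : ℕ) (c d : Vtx → ℝ) : BF N (c + d) (c + d) = BF N c c + 2 * BF N c d + BF N d d := by
  have : BF N (c + d) (c + d) = BF N c c + BF N c d + BF N d c + BF N d d := by
    unfold BF
    simp only [← Finset.sum_add_distrib]
    apply Finset.sum_congr rfl; intro v _
    apply Finset.sum_congr rfl; intro w _
    simp only [Pi.add_apply]; ring
  rw [this, BF_symm N d c]; ring

lemma Lp_sum (s : Finset Vtx) (c : Vtx → ℝ) (g : Vtx → Vtx → ℝ) (x : Vtx) :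
    Lap (fun x => ∑ w ∈ s, c w * g w x) x = ∑ w ∈ s, c w * Lap (g w) x := by
  unfold Lap av
  simp only [← Finset.sum_add_distrib, Finset.sum_div, ← Finset.sum_sub_distrib, Finset.mul_sum]
  apply Finset.sum_congr rfl; intro w _; ring

lemma BF_nonneg (N : ℕ) (c : Vtx → ℝ) : 0 ≤ BF N c c := by
  have W := Wd_intr (VN N)
  set u : Vtx → ℝ := fun x => ∑ w ∈ VN N, c w * gr (intr (VN N)) w x with hu
  have zu : ∀ x, x ∉ intr (VN N) → u x = 0 := fun x hx => by
    simp [hu, gr_off hx]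
  have : BF N c c = form (VN N) u u := by
    have e : form (VN N) u u = ∑ w ∈ VN N, c w * form (VN N) u (gr (intr (VN N)) w) := by
      unfold form
      simp only [Finset.mul_sum]
      rw [Finset.sum_comm]
      apply Finset.sum_congr rfl; intro x _
      rw [show Lap u x = _ from Lp_sum (VN N) c _ x, Finset.mul_sum]
      apply Finset.sum_congr rfl; intro w _; ring
    rw [e]
    unfold BF
    apply Finset.sum_congr rfl; intro v _
    rw [form_gr_eq W zu v, hu, Finset.mul_sum]
    apply Finset.sum_congr rfl; intro w _
    unfold GV; ring
  rw [this]
  exact form_nonneg W zu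

lemma BF_Lp {N : ℕ} {f : Vtx → ℝ} (hf : ∀ x, x ∉ intr (VN N) → f x = 0) (c : Vtx → ℝ) :
    BF N c (Lap f) = ∑ v ∈ VN N, c v * f v := by
  have W := Wd_intr (VN N)
  unfold BF
  apply Finset.sum_congr rfl; intro v _
  rw [← form_gr_eq W hf v, form_symm W hf (fun _ h => gr_off h)]
  unfold form
  rw [Finset.mul_sum]
  apply Finset.sum_congr rfl; intro w _
  rw [GV_symm, GV]; ring

variable {N : ℕ} {P : Measure FieldSp}

lemma gff_map (h : IsGFF N P) (c : Vtx → ℝ) :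
    P.map (lin N c) = gaussianReal 0 (Real.toNNReal (BF N c c)) := by
  obtain ⟨_, G, hG, hc⟩ := h
  have := hc c
  simp only [green_eq hG] at this
  exact this

lemma lin_gauss (h : IsGFF N P) (c : Vtx → ℝ) : HasGaussianLaw (lin N c) P :=
  ⟨by rw [gff_map h]; infer_instance⟩

lemma lin_memLp (h : IsGFF N P) (c : Vtx → ℝ) : MemLp (lin N c) 2 P := (lin_gauss h c).memLp_two

lemma lin_int (h : IsGFF N P) (c : Vtx → ℝ) : Integrable (lin N c) P := (lin_gauss h c).integrable

lemma lin_mean (h : IsGFF N P) (c : Vtx → ℝ) : ∫ ω, lin N c ω ∂P = 0 := by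
  have := integral_map (μ := P) (lin_meas N c).aemeasurable (f := fun x : ℝ => x) (by fun_prop)
  rw [← this, gff_map h, integral_id_gaussianReal]

lemma lin_sq (h : IsGFF N P) (c : Vtx → ℝ) : ∫ ω, lin N c ω ^ 2 ∂P = BF N c c := by
  have := h.1
  have a := variance_of_integral_eq_zero (lin_meas N c).aemeasurable (lin_mean h c)
  rw [← a]
  have b := variance_map (μ := P) (X := id) (Y := lin N c) (by fun_prop) (lin_meas N c).aemeasurable
  rw [gff_map h, variance_id_gaussianReal, Real.coe_toNNReal _ (BF_nonneg N c)] at b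
  rw [b]; rfl

lemma lin_mul_int (h : IsGFF N P) (c d : Vtx → ℝ) : Integrable (fun ω => lin N c ω * lin N d ω) P :=
  (lin_memLp h c).integrable_mul (lin_memLp h d)

lemma lin_mul (h : IsGFF N P) (c d : Vtx → ℝ) : ∫ ω, lin N c ω * lin N d ω ∂P = BF N c d := by
  have a := lin_sq h (c + d)
  rw [BF_add, lin_add, ← lin_sq h c, ← lin_sq h d] at a
  have i1 := (lin_memLp h c).integrable_sq
  have i2 := (lin_memLp h d).integrable_sq
  have i3 := lin_mul_int h c d
  have : ∫ ω, (lin N c + lin N d) ω ^ 2 ∂P =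
      ∫ ω, lin N c ω ^ 2 ∂P + 2 * ∫ ω, lin N c ω * lin N d ω ∂P + ∫ ω, lin N d ω ^ 2 ∂P := by
    rw [← integral_const_mul, ← integral_add i1 (i3.const_mul 2), ← integral_add _ i2]
    · apply integral_congr_ae; filter_upwards with ω
      simp only [Pi.add_apply]; ring
    · exact i1.add (i3.const_mul 2)
  linarith

def Phi (N : ℕ) (f : Vtx → ℝ) : FieldSp → ℝ := lin N (Lap f)

lemma Phi_mul (h : IsGFF N P) {f g : Vtx → ℝ} (hf : ∀ x, x ∉ intr (VN N) → f x = 0)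
    (hg : ∀ x, x ∉ intr (VN N) → g x = 0) :
    ∫ ω, Phi N f ω * Phi N g ω ∂P = form (VN N) f g := by
  unfold Phi
  rw [lin_mul h, BF_Lp hg, form_symm (Wd_intr _) hf hg]
  unfold form
  apply Finset.sum_congr rfl; intro w _; ring

lemma R_gauss (h : IsGFF N P) : HasGaussianLaw (fun (ω : FieldSp) (u : VN N) => ω u) P := by
  refine ⟨isGaussian_of_map_eq_gaussianReal fun L => ?_⟩
  set c : Vtx → ℝ := fun u => if hu : u ∈ VN N then L (Pi.single ⟨u, hu⟩ 1) else 0 with hc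
  refine ⟨0, Real.toNNReal (BF N c c), ?_⟩
  rw [← gff_map h c, Measure.map_map (by fun_prop) (by fun_prop)]
  congr 1
  ext ω
  simp only [Function.comp]
  have : (fun u : VN N => ω u) = ∑ u : VN N, ω u • (Pi.single u 1 : VN N → ℝ) := by
    ext w
    simp [Finset.sum_apply, Pi.single_apply]
  rw [this, map_sum]
  unfold lin
  rw [← Finset.sum_coe_sort (VN N)]
  apply Finset.sum_congr rfl
  intro u _
  rw [map_smul]
  simp [hc, mul_comm]

lemma scaleAlg_le (N : ℕ) (l : ℝ) (v : Vtx) : scaleAlg N l v ≤ (inferInstance : MeasurableSpace FieldSp) := by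
  unfold scaleAlg
  refine iSup₂_le fun w _ => ?_
  exact (measurable_pi_apply w).comap_le

lemma scaleAlg_coord {l : ℝ} {v w : Vtx} (hw : w ∈ VN N) (hn : w ∉ Dl N v l) :
    @Measurable _ _ (scaleAlg N l v) _ (fun ω : FieldSp => ω w) := by
  rw [measurable_iff_comap_le]
  unfold scaleAlg
  exact le_iSup₂_of_le w ⟨hw, hn⟩ le_rfl

lemma Phi_indep (h : IsGFF N P) {v : Vtx} {l : ℝ} {f : Vtx → ℝ}
    (hv : v ∈ VN N) (hf : ∀ x, x ∉ Dl N v l → f x = 0) :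
    Indep (MeasurableSpace.comap (Phi N f) inferInstance) (scaleAlg N l v) P := by
  have := h.1
  have hf' : ∀ x, x ∉ intr (VN N) → f x = 0 := fun x hx => hf x (fun h => hx (Dl_sub hv l h))
  let T := {w : VN N // (w : Vtx) ∉ Dl N v l}
  let X : Unit → FieldSp → ℝ := fun _ => Phi N f
  let Y : T → FieldSp → ℝ := fun t ω => ω t.1.1
  let A : ((VN N) → ℝ) →L[ℝ] ((Unit → ℝ) × (T → ℝ)) :=
    (ContinuousLinearMap.pi fun _ => ∑ u : VN N, Lap f u • ContinuousLinearMap.proj u).prod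
      (ContinuousLinearMap.pi fun t => ContinuousLinearMap.proj t.1)
  have hg : HasGaussianLaw (fun ω ↦ ((fun i ↦ X i ω), (fun j ↦ Y j ω))) P := by
    have := (R_gauss h).map_fun A
    have e : (fun ω : FieldSp ↦ ((fun i ↦ X i ω), (fun j ↦ Y j ω))) =
        fun ω : FieldSp => A (fun u : VN N => ω u) := by
      funext ω
      refine Prod.ext ?_ ?_
      · funext i
        simp only [X, A, ContinuousLinearMap.prod_apply, ContinuousLinearMap.pi_apply, Phi, lin]
        rw [← Finset.sum_coe_sort (VN N)]
        simp
      · funext j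
        simp [Y, A]
    rw [e]
    exact this
  have hi := hg.indepFun_of_covariance_eval (by
    intro i j
    have mY : Y j = lin N (Pi.single j.1.1 1) := (lin_single j.1.2).symm
    have hX : X i = lin N (Lap f) := rfl
    rw [hX, mY, covariance_eq_sub (lin_memLp h _) (lin_memLp h _), lin_mean h, zero_mul, sub_zero]
    have := lin_mul h (Pi.single j.1.1 1) (Lap f)
    rw [BF_Lp hf', Finset.sum_eq_single j.1.1 (by intro b _ hb; simp [hb]) (by intro hh; exact absurd j.1.2 hh), hf _ j.2, mul_zero] at this
    rw [← this]
    apply integral_congr_ae; filter_upwards with ω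
    simp only [Pi.mul_apply]; ring)
  rw [IndepFun_iff_Indep] at hi
  refine indep_of_indep_of_le_left (indep_of_indep_of_le_right hi ?_) ?_
  · unfold scaleAlg
    refine iSup₂_le fun w hw => ?_
    rw [← measurable_iff_comap_le]
    have : (fun ω : FieldSp => ω w) = (fun y : T → ℝ => y ⟨⟨w, hw.1⟩, hw.2⟩) ∘ (fun ω j => Y j ω) := rfl
    rw [this]
    exact (measurable_pi_apply _).comp (comap_measurable _)
  · rw [← measurable_iff_comap_le]
    have : Phi N f = (fun y : Unit → ℝ => y ()) ∘ (fun ω j => X j ω) := rfl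
    rw [this]
    exact (measurable_pi_apply _).comp (comap_measurable _)

lemma Phi_condExp (h : IsGFF N P) {v : Vtx} {l : ℝ} {f : Vtx → ℝ}
    (hv : v ∈ VN N) (hf : ∀ x, x ∉ Dl N v l → f x = 0) :
    P[Phi N f | scaleAlg N l v] =ᵐ[P] 0 := by
  have := h.1
  have m : Measurable (Phi N f) := lin_meas _ _
  have := condExp_indep_eq (μ := P) m.comap_le (scaleAlg_le N l v)
    (f := Phi N f) (comap_measurable _).stronglyMeasurable (Phi_indep h hv hf)
  refine this.trans ?_
  filter_upwards with ω
  exact lin_mean h _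

lemma phiScale_eq (h : IsGFF N P) {v : Vtx} (hv : v ∈ VN N) (l : ℝ) :
    phiScale N P v l =ᵐ[P] fun ω => ω v - Phi N (gr (Dl N v l) v) ω := by
  have := h.1
  set g := gr (Dl N v l) v with hg
  have e : (fun ω : FieldSp => ω v) = lin N (Pi.single v 1 - Lap g) + Phi N g := by
    rw [lin_sub, lin_single hv]; ext ω; simp [Phi]
  have e2 : lin N (Pi.single v 1 - Lap g) = fun ω => ω v - Phi N g ω := by
    rw [lin_sub, lin_single hv]; rfl
  unfold phiScale
  rw [e]
  have c := condExp_add (μ := P) (lin_int h (Pi.single v 1 - Lap g)) (lin_int h (Lap g)) (scaleAlg N l v)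
  have d := Phi_condExp h (l := l) hv (f := g) (fun x hx => gr_off hx)
  have m : @Measurable _ _ (scaleAlg N l v) _ (lin N (Pi.single v 1 - Lap g)) := by
    unfold lin
    apply Finset.measurable_fun_sum
    intro u hu
    by_cases huD : u ∈ Dl N v l
    · have : ((Pi.single v 1 : Vtx → ℝ) - Lap g) u = 0 := by
        rw [Pi.sub_apply, hg, Lp_gr_in huD, Pi.single_apply, sub_self]
      simp only [this, zero_mul]
      exact measurable_const
    · exact (scaleAlg_coord hu huD).const_mul _
  rw [condExp_of_stronglyMeasurable (scaleAlg_le N l v) m.stronglyMeasurable (lin_int h _)] at c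
  refine c.trans ?_
  filter_upwards [d] with ω hω
  have := congrFun e2 ω
  simp only [Pi.add_apply]
  rw [this]
  change ω v - Phi N g ω + P[Phi N g | scaleAlg N l v] ω = _
  rw [hω]; simp

lemma coord_int (h : IsGFF N P) {v : Vtx} (hv : v ∈ VN N) : Integrable (fun ω : FieldSp => ω v) P := by
  rw [← lin_single hv]; exact lin_int h _

lemma scaleAlg_mono (hN : 1 ≤ N) {v : Vtx} (hv : v ∈ VN N) {l l' : ℝ} (h0 : 0 ≤ l) (hl : l ≤ l') :
    scaleAlg N l v ≤ scaleAlg N l' v := by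
  unfold scaleAlg
  refine iSup₂_le fun w hw => ?_
  exact le_iSup₂_of_le w ⟨hw.1, fun hh => hw.2 (Dl_anti hN hv h0 hl hh)⟩ le_rfl

lemma phi_tower (hN : 1 ≤ N) (h : IsGFF N P) {v : Vtx} (hv : v ∈ VN N) {l a : ℝ} (h0 : 0 ≤ l) (ha : 0 ≤ a) :
    P[phiScale N P v l | scaleAlg N a v] =ᵐ[P] phiScale N P v (min l a) := by
  have := h.1
  rcases le_total l a with hl | hl
  · rw [min_eq_left hl, condExp_of_stronglyMeasurable (scaleAlg_le N a v)]
    · exact stronglyMeasurable_condExp.mono (scaleAlg_mono hN hv h0 hl)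
    · exact integrable_condExp
  · rw [min_eq_right hl]
    exact condExp_condExp_of_le (scaleAlg_mono hN hv ha hl) (scaleAlg_le N l v)

end GFFProb


noncomputable section PsiPart
open MeasureTheory ProbabilityTheory

def psig (N M : ℕ) (sigv lamv : ℕ → ℝ) (v : Vtx) (a : ℝ) : Vtx → ℝ :=
  ∑ i ∈ Finset.Icc 1 M, sigv i •
    (gr (Dl N v (min (lamv (i - 1)) a)) v - gr (Dl N v (min (lamv i) a)) v)

lemma Lap_smul (c : ℝ) (f : Vtx → ℝ) : Lap (c • f) = c • Lap f := by
  ext x; simp [Lap, av_smul]; ring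
lemma Lap_fsum (s : Finset ℕ) (f : ℕ → Vtx → ℝ) : Lap (∑ i ∈ s, f i) = ∑ i ∈ s, Lap (f i) := by
  induction s using Finset.induction_on with
  | empty => ext x; simp [Lap, av]
  | insert a s ha ih => rw [Finset.sum_insert ha, Finset.sum_insert ha, ← ih]; ext x; exact Lp_add _ _ x
lemma lin_fsum (N : ℕ) (s : Finset ℕ) (f : ℕ → Vtx → ℝ) : lin N (∑ i ∈ s, f i) = ∑ i ∈ s, lin N (f i) := by
  induction s using Finset.induction_on with
  | empty => ext x; simp [lin]
  | insert a s ha ih => rw [Finset.sum_insert ha, Finset.sum_insert ha, ← ih, lin_add]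

lemma Phi_fsum (N : ℕ) (s : Finset ℕ) (f : ℕ → Vtx → ℝ) : Phi N (∑ i ∈ s, f i) = ∑ i ∈ s, Phi N (f i) := by
  unfold Phi; rw [Lap_fsum, lin_fsum]
lemma Phi_smul (N : ℕ) (c : ℝ) (f : Vtx → ℝ) : Phi N (c • f) = c • Phi N f := by
  unfold Phi; rw [Lap_smul, lin_smul]
lemma Phi_sub (N : ℕ) (f g : Vtx → ℝ) : Phi N (f - g) = Phi N f - Phi N g := by
  unfold Phi; rw [show Lap (f - g) = Lap f - Lap g from funext fun x => Lp_sub f g x, lin_sub]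

lemma psig_off {N M : ℕ} {sigv lamv : ℕ → ℝ} {v : Vtx} (hv : v ∈ VN N) (a : ℝ) (x : Vtx)
    (hx : x ∉ intr (VN N)) : psig N M sigv lamv v a x = 0 := by
  unfold psig
  rw [Finset.sum_apply]
  apply Finset.sum_eq_zero
  intro i _
  simp [gr_Dl_off hv hx]

variable {N M : ℕ} {P : Measure FieldSp} {sigv lamv : ℕ → ℝ}

lemma lam_mem (hp : ScaleParams M sigv lamv) {i : ℕ} (hi : i ≤ M) : 0 ≤ lamv i ∧ lamv i ≤ 1 := by
  obtain ⟨_, _, h0, h1, hs⟩ := hp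
  have mono : ∀ k j, j + k ≤ M → lamv j ≤ lamv (j + k) := by
    intro k
    induction k with
    | zero => intro j _; exact le_rfl
    | succ k ih =>
      intro j hj
      exact (ih j (by omega)).trans (hs (j + k) (by omega)).le
  constructor
  · have := mono i 0 (by omega); rwa [h0, zero_add] at this
  · have := mono (M - i) i (by omega); rwa [show i + (M - i) = M by omega, h1] at this

lemma phi_sum_eq (h : IsGFF N P) {v : Vtx} (hv : v ∈ VN N) (a : ℝ) :
    (fun ω => ∑ i ∈ Finset.Icc 1 M, sigv i *
      (phiScale N P v (min (lamv i) a) ω - phiScale N P v (min (lamv (i - 1)) a) ω)) =ᵐ[P]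
      Phi N (psig N M sigv lamv v a) := by
  have hall : ∀ᵐ ω ∂P, ∀ i : ℕ, phiScale N P v (min (lamv i) a) ω =
      ω v - Phi N (gr (Dl N v (min (lamv i) a)) v) ω := by
    rw [ae_all_iff]; intro i; exact phiScale_eq h hv _
  filter_upwards [hall] with ω hω
  unfold psig
  rw [Phi_fsum, Finset.sum_apply]
  apply Finset.sum_congr rfl
  intro i _
  rw [hω, hω, Phi_smul, Phi_sub]
  simp

lemma psiFld_eq (hp : ScaleParams M sigv lamv) (h : IsGFF N P) {v : Vtx} (hv : v ∈ VN N) :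
    psiFld N M sigv lamv P v =ᵐ[P] Phi N (psig N M sigv lamv v 1) := by
  refine EventuallyEq.trans ?_ (phi_sum_eq h hv 1)
  filter_upwards with ω
  unfold psiFld
  apply Finset.sum_congr rfl
  intro i hi
  rw [Finset.mem_Icc] at hi
  rw [min_eq_left (lam_mem hp hi.2).2, min_eq_left (lam_mem hp (show i - 1 ≤ M by omega)).2]

lemma psiScale_eq (hN : 1 ≤ N) (hp : ScaleParams M sigv lamv) (h : IsGFF N P) {v : Vtx} (hv : v ∈ VN N)
    {a : ℝ} (ha : 0 ≤ a) :
    psiScale N M sigv lamv P v a =ᵐ[P] Phi N (psig N M sigv lamv v a) := by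
  have := h.1
  refine EventuallyEq.trans ?_ (phi_sum_eq h hv a)
  unfold psiScale
  have e : psiFld N M sigv lamv P v = ∑ i ∈ Finset.Icc 1 M, sigv i •
      (phiScale N P v (lamv i) - phiScale N P v (lamv (i - 1))) := by
    ext ω; simp [psiFld, Finset.sum_apply]
  rw [e]
  have ip : ∀ l, Integrable (phiScale N P v l) P := fun l => integrable_condExp
  have c1 := condExp_finset_sum (μ := P) (s := Finset.Icc 1 M) (f := fun i => sigv i •
      (phiScale N P v (lamv i) - phiScale N P v (lamv (i - 1))))
      (fun i _ => ((ip _).sub (ip _)).smul _) (scaleAlg N a v)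
  refine c1.trans ?_
  have hall : ∀ᵐ ω ∂P, ∀ i ∈ Finset.Icc 1 M, P[sigv i •
      (phiScale N P v (lamv i) - phiScale N P v (lamv (i - 1))) | scaleAlg N a v] ω = sigv i *
      (phiScale N P v (min (lamv i) a) ω - phiScale N P v (min (lamv (i - 1)) a) ω) := by
    rw [ae_all_iff]; intro i
    by_cases hi : i ∈ Finset.Icc 1 M
    · have hi' := Finset.mem_Icc.1 hi
      have d1 := condExp_smul (μ := P) (sigv i) (phiScale N P v (lamv i) - phiScale N P v (lamv (i - 1))) (scaleAlg N a v)
      have d2 := condExp_sub (μ := P) (ip (lamv i)) (ip (lamv (i - 1))) (scaleAlg N a v)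
      have d3 := phi_tower hN h hv (lam_mem hp hi'.2).1 ha
      have d4 := phi_tower hN h hv (lam_mem hp (show i - 1 ≤ M by omega)).1 ha
      filter_upwards [d1, d2, d3, d4] with ω e1 e2 e3 e4 _
      rw [e1, Pi.smul_apply, e2, Pi.sub_apply, e3, e4, smul_eq_mul]
    · filter_upwards with ω h'; exact absurd h' hi
  filter_upwards [hall] with ω hω
  rw [Finset.sum_apply]
  exact Finset.sum_congr rfl hω

def FF (N M : ℕ) (sigv lamv : ℕ → ℝ) (v v' : Vtx) (a : ℝ) : ℝ :=
  form (VN N) (psig N M sigv lamv v a) (psig N M sigv lamv v' 1)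

lemma inc_eq (hN : 1 ≤ N) (hp : ScaleParams M sigv lamv) (h : IsGFF N P) {v v' : Vtx} (hv : v ∈ VN N)
    (hv' : v' ∈ VN N) {a a' : ℝ} (ha : 0 ≤ a) (ha' : 0 ≤ a') :
    ∫ ω, psiInc N M sigv lamv P v a a' ω * psiFld N M sigv lamv P v' ω ∂P =
      FF N M sigv lamv v v' a' - FF N M sigv lamv v v' a := by
  have e1 := psiScale_eq hN hp h hv ha
  have e2 := psiScale_eq hN hp h hv ha'
  have e3 := psiFld_eq hp h hv'
  unfold FF
  rw [← form_sub_left, ← Phi_mul h (f := psig N M sigv lamv v a' - psig N M sigv lamv v a)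
    (fun x hx => by rw [Pi.sub_apply, psig_off hv _ x hx, psig_off hv _ x hx, sub_zero])
    (fun x hx => psig_off hv' _ x hx)]
  apply integral_congr_ae
  filter_upwards [e1, e2, e3] with ω h1 h2 h3
  unfold psiInc
  rw [h1, h2, h3, Phi_sub]; rfl

lemma form_fsum_left (V : Finset Vtx) (s : Finset ℕ) (f : ℕ → Vtx → ℝ) (g : Vtx → ℝ) :
    form V (∑ i ∈ s, f i) g = ∑ i ∈ s, form V (f i) g := by
  unfold form
  rw [Finset.sum_comm]
  apply Finset.sum_congr rfl; intro x _
  rw [Finset.sum_apply, Finset.sum_mul]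

lemma form_fsum_right (V : Finset Vtx) (s : Finset ℕ) (f : Vtx → ℝ) (g : ℕ → Vtx → ℝ) :
    form V f (∑ i ∈ s, g i) = ∑ i ∈ s, form V f (g i) := by
  unfold form
  rw [Finset.sum_comm, Lap_fsum]
  apply Finset.sum_congr rfl; intro x _
  rw [Finset.sum_apply, Finset.mul_sum]

lemma form_smul_left (V : Finset Vtx) (c : ℝ) (f g : Vtx → ℝ) : form V (c • f) g = c * form V f g := by
  unfold form
  rw [Finset.mul_sum]
  apply Finset.sum_congr rfl; intro x _
  simp [mul_assoc]

lemma form_smul_right (V : Finset Vtx) (c : ℝ) (f g : Vtx → ℝ) : form V f (c • g) = c * form V f g := by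
  unfold form
  rw [Finset.mul_sum, Lap_smul]
  apply Finset.sum_congr rfl; intro x _
  simp; ring

/-- second difference sum of a kernel -/
def SD (M : ℕ) (sigv lamv : ℕ → ℝ) (a : ℝ) (K : ℝ → ℝ → ℝ) : ℝ :=
  ∑ i ∈ Finset.Icc 1 M, ∑ j ∈ Finset.Icc 1 M, sigv i * sigv j *
    (K (min (lamv (i - 1)) a) (min (lamv (j - 1)) 1) - K (min (lamv (i - 1)) a) (min (lamv j) 1)
      - K (min (lamv i) a) (min (lamv (j - 1)) 1) + K (min (lamv i) a) (min (lamv j) 1))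

lemma FF_eq (v v' : Vtx) (a : ℝ) :
    FF N M sigv lamv v v' a = SD M sigv lamv a (fun l l' => KK N v l v' l') := by
  unfold FF SD psig
  rw [form_fsum_left]
  apply Finset.sum_congr rfl; intro i _
  rw [form_fsum_right]
  apply Finset.sum_congr rfl; intro j _
  rw [form_smul_left, form_smul_right, form_sub_left, form_sub_right, form_sub_right]
  unfold KK
  ring

lemma SD_diff (hp : ScaleParams M sigv lamv) {a : ℝ} (ha : 0 ≤ a) {K K' : ℝ → ℝ → ℝ} {E : ℝ}
    (hK : ∀ x y, 0 ≤ x → x ≤ 1 → 0 ≤ y → y ≤ 1 → |K x y - K' x y| ≤ E) :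
    |SD M sigv lamv a K - SD M sigv lamv a K'| ≤
      (∑ i ∈ Finset.Icc 1 M, ∑ j ∈ Finset.Icc 1 M, sigv i * sigv j * 4) * E := by
  unfold SD
  simp only [← Finset.sum_sub_distrib, Finset.sum_mul]
  refine (Finset.abs_sum_le_sum_abs _ _).trans (Finset.sum_le_sum fun i hi => ?_)
  refine (Finset.abs_sum_le_sum_abs _ _).trans (Finset.sum_le_sum fun j hj => ?_)
  have hi' := Finset.mem_Icc.1 hi
  have hj' := Finset.mem_Icc.1 hj
  have hs := mul_pos (hp.2.1 i hi) (hp.2.1 j hj)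
  rw [← mul_sub, abs_mul, abs_of_pos hs, mul_assoc (sigv i * sigv j)]
  apply mul_le_mul_of_nonneg_left _ hs.le
  have m : ∀ k, k ≤ M → ∀ b : ℝ, 0 ≤ b → 0 ≤ min (lamv k) b ∧ min (lamv k) b ≤ 1 := fun k hk b hb =>
    ⟨le_min (lam_mem hp hk).1 hb, (min_le_left _ _).trans (lam_mem hp hk).2⟩
  have m1 := m i hi'.2 a ha
  have m2 := m (i - 1) (by omega) a ha
  have m3 := m j hj'.2 1 zero_le_one
  have m4 := m (j - 1) (by omega) 1 zero_le_one
  have k1 := abs_le.1 (hK _ _ m1.1 m1.2 m3.1 m3.2)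
  have k2 := abs_le.1 (hK _ _ m1.1 m1.2 m4.1 m4.2)
  have k3 := abs_le.1 (hK _ _ m2.1 m2.2 m3.1 m3.2)
  have k4 := abs_le.1 (hK _ _ m2.1 m2.2 m4.1 m4.2)
  rw [abs_le]
  constructor <;> linarith [k1.1, k1.2, k2.1, k2.2, k3.1, k3.2, k4.1, k4.2]

def Ind (x r : ℝ) : ℝ := if x < r then 1 else 0

lemma Ind_int (x a b : ℝ) : IntervalIntegrable (Ind x) volume a b := by
  apply Monotone.intervalIntegrable
  intro r s h
  unfold Ind
  split_ifs with h1 h2 <;> first | norm_num | skip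
  exact absurd (h1.trans_le h) h2

lemma Ind_mul (x y r : ℝ) : Ind x r * Ind y r = Ind (max x y) r := by
  unfold Ind
  simp only [max_lt_iff]
  by_cases h1 : x < r <;> by_cases h2 : y < r <;> simp [h1, h2]

lemma Ind_mul_int (x y a b : ℝ) : IntervalIntegrable (fun r => Ind x r * Ind y r) volume a b := by
  simp only [Ind_mul]; exact Ind_int _ _ _

lemma Ind_integral {z b : ℝ} (hz : 0 ≤ z) (hb : 0 ≤ b) : ∫ r in (0:ℝ)..b, Ind z r = max 0 (b - z) := by
  rw [intervalIntegral.integral_of_le hb]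
  have : Ind z = (Set.Ioi z).indicator (fun _ => (1:ℝ)) := by
    ext r; simp [Ind, Set.indicator_apply]
  rw [this, setIntegral_indicator measurableSet_Ioi, Set.Ioc_inter_Ioi]
  simp [hz, max_comm]

def Ast (M : ℕ) (sigv lamv : ℕ → ℝ) (a r : ℝ) : ℝ :=
  ∑ i ∈ Finset.Icc 1 M, sigv i * (Ind (min (lamv (i - 1)) a) r - Ind (min (lamv i) a) r)

lemma Ast_prod (a r : ℝ) : Ast M sigv lamv a r * Ast M sigv lamv 1 r =
    SD M sigv lamv a (fun x y => Ind x r * Ind y r) := by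
  unfold Ast SD
  rw [Finset.sum_mul_sum]
  apply Finset.sum_congr rfl; intro i _
  apply Finset.sum_congr rfl; intro j _
  ring

lemma SD_int (a c d : ℝ) :
    IntervalIntegrable (fun r => SD M sigv lamv a (fun x y => Ind x r * Ind y r)) volume c d := by
  have e : (fun r => SD M sigv lamv a (fun x y => Ind x r * Ind y r)) =
    ∑ i ∈ Finset.Icc 1 M, ∑ j ∈ Finset.Icc 1 M, fun r => sigv i * sigv j *
    (Ind (min (lamv (i - 1)) a) r * Ind (min (lamv (j - 1)) 1) r
     - Ind (min (lamv (i - 1)) a) r * Ind (min (lamv j) 1) r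
      - Ind (min (lamv i) a) r * Ind (min (lamv (j - 1)) 1) r
      + Ind (min (lamv i) a) r * Ind (min (lamv j) 1) r) := by
    ext r; simp [SD, Finset.sum_apply]
  rw [e]
  apply IntervalIntegrable.sum; intro i _
  apply IntervalIntegrable.sum; intro j _
  apply IntervalIntegrable.const_mul
  exact (((Ind_mul_int _ _ _ _).sub (Ind_mul_int _ _ _ _)).sub (Ind_mul_int _ _ _ _)).add (Ind_mul_int _ _ _ _)

lemma SD_integral (hp : ScaleParams M sigv lamv) {a b : ℝ} (ha : 0 ≤ a) (hb : 0 ≤ b) :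
    ∫ r in (0:ℝ)..b, SD M sigv lamv a (fun x y => Ind x r * Ind y r) =
      SD M sigv lamv a (fun x y => max 0 (b - max x y)) := by
  unfold SD
  have J := Ind_mul_int
  rw [intervalIntegral.integral_finset_sum]
  swap
  · intro i _
    have : (fun r => ∑ j ∈ Finset.Icc 1 M, sigv i * sigv j *
    (Ind (min (lamv (i - 1)) a) r * Ind (min (lamv (j - 1)) 1) r
     - Ind (min (lamv (i - 1)) a) r * Ind (min (lamv j) 1) r
      - Ind (min (lamv i) a) r * Ind (min (lamv (j - 1)) 1) r
      + Ind (min (lamv i) a) r * Ind (min (lamv j) 1) r)) =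
      ∑ j ∈ Finset.Icc 1 M, fun r => sigv i * sigv j *
    (Ind (min (lamv (i - 1)) a) r * Ind (min (lamv (j - 1)) 1) r
     - Ind (min (lamv (i - 1)) a) r * Ind (min (lamv j) 1) r
      - Ind (min (lamv i) a) r * Ind (min (lamv (j - 1)) 1) r
      + Ind (min (lamv i) a) r * Ind (min (lamv j) 1) r) := by ext r; simp [Finset.sum_apply]
    rw [this]
    apply IntervalIntegrable.sum; intro j _
    apply IntervalIntegrable.const_mul
    exact (((J _ _ _ _).sub (J _ _ _ _)).sub (J _ _ _ _)).add (J _ _ _ _)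
  apply Finset.sum_congr rfl; intro i hi
  rw [intervalIntegral.integral_finset_sum]
  swap
  · intro j _
    apply IntervalIntegrable.const_mul
    exact (((J _ _ _ _).sub (J _ _ _ _)).sub (J _ _ _ _)).add (J _ _ _ _)
  apply Finset.sum_congr rfl; intro j hj
  have hi' := Finset.mem_Icc.1 hi
  have hj' := Finset.mem_Icc.1 hj
  have m : ∀ k, k ≤ M → ∀ b : ℝ, 0 ≤ b → 0 ≤ min (lamv k) b := fun k hk b hb =>
    le_min (lam_mem hp hk).1 hb
  have q : ∀ x y : ℝ, 0 ≤ x → ∫ r in (0:ℝ)..b, Ind x r * Ind y r = max 0 (b - max x y) := by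
    intro x y hx
    simp only [Ind_mul]
    exact Ind_integral (le_max_of_le_left hx) hb
  rw [intervalIntegral.integral_const_mul,
    intervalIntegral.integral_add (((J _ _ _ _).sub (J _ _ _ _)).sub (J _ _ _ _)) (J _ _ _ _),
    intervalIntegral.integral_sub ((J _ _ _ _).sub (J _ _ _ _)) (J _ _ _ _),
    intervalIntegral.integral_sub (J _ _ _ _) (J _ _ _ _),
    q _ _ (m i hi'.2 a ha), q _ _ (m i hi'.2 a ha), q _ _ (m (i - 1) (by omega) a ha),
    q _ _ (m (i - 1) (by omega) a ha)]

lemma Ast_eq (hp : ScaleParams M sigv lamv) {a r : ℝ} (hr : 0 < r) :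
    Ast M sigv lamv a r = if r ≤ a then stepFn M sigv lamv r else 0 := by
  unfold Ast stepFn
  rw [if_neg hr.ne', zero_add]
  split_ifs with h
  · apply Finset.sum_congr rfl; intro i hi
    have hi' := Finset.mem_Icc.1 hi
    have hlt := hp.2.2.2.2 (i - 1) (by omega)
    rw [Nat.sub_add_cancel hi'.1] at hlt
    unfold Ind
    have e : ∀ x, (min x a < r) ↔ x < r := by
      intro x; rw [min_lt_iff]; constructor
      · rintro (h' | h')
        · exact h'
        · linarith
      · exact Or.inl
    simp only [e]
    by_cases h1 : lamv i < r
    · simp [h1, hlt.trans h1]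
    · by_cases h2 : lamv (i - 1) < r
      · simp [h1, h2, not_lt.1 h1]
      · simp [h1, h2]
  · push Not at h
    apply Finset.sum_eq_zero; intro i _
    unfold Ind
    rw [if_pos (min_lt_of_right_lt h), if_pos (min_lt_of_right_lt h)]; simp

lemma sq_eq (hp : ScaleParams M sigv lamv) {a r : ℝ} (hr : 0 < r) (hr1 : r ≤ 1) :
    SD M sigv lamv a (fun x y => Ind x r * Ind y r) =
      (Set.Iic a).indicator (fun r => stepFn M sigv lamv r ^ 2) r := by
  rw [← Ast_prod, Ast_eq hp hr, Ast_eq hp hr, if_pos hr1, Set.indicator_apply]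
  by_cases h : r ≤ a
  · simp [h]; ring
  · simp [h]

lemma step_int (hp : ScaleParams M sigv lamv) {b : ℝ} (hb : 0 ≤ b) (hb1 : b ≤ 1) :
    IntervalIntegrable (fun r => stepFn M sigv lamv r ^ 2) volume 0 b := by
  refine (SD_int (M := M) (sigv := sigv) (lamv := lamv) 1 0 b).congr ?_
  rw [Set.uIoc_of_le hb]
  intro r hr
  have h1 : r ≤ 1 := hr.2.trans hb1
  simp only []
  rw [sq_eq hp hr.1 h1, Set.indicator_of_mem (by exact h1)]

lemma SD_main (hp : ScaleParams M sigv lamv) {a b : ℝ} (ha : 0 ≤ a) (hb : 0 ≤ b) (hb1 : b ≤ 1) :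
    SD M sigv lamv a (fun x y => max 0 (b - max x y)) =
      ∫ r in (0:ℝ)..(min a b), stepFn M sigv lamv r ^ 2 := by
  rw [← SD_integral hp ha hb, intervalIntegral.integral_of_le hb,
    intervalIntegral.integral_of_le (le_min ha hb)]
  rw [setIntegral_congr_fun measurableSet_Ioc (g := (Set.Iic a).indicator (fun r => stepFn M sigv lamv r ^ 2))
    (fun r hr => sq_eq hp hr.1 (hr.2.trans hb1)), setIntegral_indicator measurableSet_Iic]
  congr 2
  ext r; simp; tauto

lemma step_pos (hp : ScaleParams M sigv lamv) {r : ℝ} (hr : 0 < r) (hr1 : r ≤ 1) :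
    0 < stepFn M sigv lamv r := by
  unfold stepFn
  rw [if_neg hr.ne', zero_add]
  have hex : ∃ i, r ≤ lamv i := ⟨M, by rw [hp.2.2.2.1]; exact hr1⟩
  set k := Nat.find hex with hk
  have h1 : r ≤ lamv k := Nat.find_spec hex
  have hk0 : k ≠ 0 := by
    intro h; rw [h, hp.2.2.1] at h1; linarith
  have hkM : k ≤ M := Nat.find_min' hex (by rw [hp.2.2.2.1]; exact hr1)
  have h2 : lamv (k - 1) < r := not_le.1 (Nat.find_min hex (show k - 1 < k by omega))
  have hkm : k ∈ Finset.Icc 1 M := Finset.mem_Icc.2 ⟨by omega, hkM⟩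
  apply Finset.sum_pos'
  · intro i hi
    split_ifs
    · exact (hp.2.1 i hi).le
    · exact le_rfl
  · exact ⟨k, hkm, by rw [if_pos ⟨h2, h1⟩]; exact hp.2.1 k hkm⟩

lemma Jpos (hp : ScaleParams M sigv lamv) : 0 < Jsig2 M sigv lamv 1 := by
  unfold Jsig2 Jint
  apply intervalIntegral.intervalIntegral_pos_of_pos_on (step_int hp zero_le_one le_rfl)
  · intro x hx; exact pow_pos (step_pos hp hx.1 hx.2.le) 2
  · exact zero_lt_one

lemma Jint2_eq (hp : ScaleParams M sigv lamv) {s t : ℝ} (hs : 0 ≤ s) (hst : s ≤ t) (ht : t ≤ 1) :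
    Jint2 (fun r => stepFn M sigv lamv r ^ 2) s t =
      (∫ r in (0:ℝ)..t, stepFn M sigv lamv r ^ 2) - ∫ r in (0:ℝ)..s, stepFn M sigv lamv r ^ 2 := by
  unfold Jint2
  rw [intervalIntegral.integral_interval_sub_left (step_int hp (hs.trans hst) ht) (step_int hp hs (hst.trans ht))]

lemma Jint2_bd (hp : ScaleParams M sigv lamv) {s t : ℝ} (hs : 0 ≤ s) (hst : s ≤ t) (ht : t ≤ 1) :
    0 ≤ Jint2 (fun r => stepFn M sigv lamv r ^ 2) s t ∧
    Jint2 (fun r => stepFn M sigv lamv r ^ 2) s t ≤ Jsig2 M sigv lamv 1 := by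
  constructor
  · exact intervalIntegral.integral_nonneg hst (fun r _ => sq_nonneg _)
  · unfold Jint2 Jsig2 Jint
    apply intervalIntegral.integral_mono_interval hs hst ht
    · filter_upwards with r; exact sq_nonneg _
    · exact step_int hp zero_le_one le_rfl

lemma FF_main (hN : 2 ≤ N) (hp : ScaleParams M sigv lamv) {v v' : Vtx} {ρ : ℝ} (hv : v ∈ AN N ρ)
    (hv' : v' ∈ AN N ρ) (hρ : 0 ≤ ρ) {a : ℝ} (ha : 0 ≤ a) :
    |FF N M sigv lamv v v' a -
      Real.log N * ∫ r in (0:ℝ)..(min a (bScale N v v')), stepFn M sigv lamv r ^ 2| ≤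
      (∑ i ∈ Finset.Icc 1 M, ∑ j ∈ Finset.Icc 1 M, sigv i * sigv j * 4) * (CK + ρ * Real.log N) := by
  have hb := bScale_mem (v' := v') (AN_sub hv)
  rw [FF_eq, ← SD_main hp ha hb.1 hb.2]
  have : Real.log N * SD M sigv lamv a (fun x y => max 0 (bScale N v v' - max x y)) =
      SD M sigv lamv a (fun x y => Real.log N * max 0 (bScale N v v' - max x y)) := by
    unfold SD
    rw [Finset.mul_sum]
    apply Finset.sum_congr rfl; intro i _
    rw [Finset.mul_sum]
    apply Finset.sum_congr rfl; intro j _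
    ring
  rw [this]
  apply SD_diff hp ha
  intro x y hx hx1 hy hy1
  exact KK_main hN hv hv' hρ hx hy hx1 hy1

lemma final_arith {E T J L C C0 ρ : ℝ} (hJ : 0 < J) (hC0 : 0 < C0) (hC : 0 ≤ C) (hL : 1 ≤ L)
    (hT0 : 0 ≤ T) (hTJ : T ≤ J) (hρ : 0 ≤ ρ) (hE : |E - L * T| ≤ C * (1 + ρ * L)) :
    |E / (J * L + C0) - T / J| ≤ ((C + C0) / J + 1) / Real.sqrt L + (C / J + 1) * ρ := by
  have hL0 : 0 < L := by linarith
  have hJL : 0 < J * L := mul_pos hJ hL0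
  have hd : 0 < J * L + C0 := by linarith
  have e : E / (J * L + C0) - T / J = ((E - L * T) - T * C0 / J) / (J * L + C0) := by
    field_simp; ring
  rw [e, abs_div, abs_of_pos hd]
  have h1 : |(E - L * T) - T * C0 / J| ≤ C * (1 + ρ * L) + C0 := by
    refine (abs_sub _ _).trans (add_le_add hE ?_)
    rw [abs_of_nonneg (by positivity), div_le_iff₀ hJ]
    nlinarith
  have h2 : |(E - L * T) - T * C0 / J| / (J * L + C0) ≤ (C * (1 + ρ * L) + C0) / (J * L) :=
    div_le_div₀ (by positivity) h1 hJL (by linarith)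
  have h3 : (C * (1 + ρ * L) + C0) / (J * L) = (C + C0) / J / L + C / J * ρ := by
    field_simp; ring
  have hs : Real.sqrt L ≤ L := by
    rw [Real.sqrt_le_left hL0.le]; nlinarith
  have hs0 : 0 < Real.sqrt L := Real.sqrt_pos.2 hL0
  have h4 : (C + C0) / J / L ≤ (C + C0) / J / Real.sqrt L :=
    div_le_div_of_nonneg_left (by positivity) hs0 hs
  have h5 : ((C + C0) / J + 1) / Real.sqrt L = (C + C0) / J / Real.sqrt L + 1 / Real.sqrt L := add_div _ _ _
  have h6 : 0 < 1 / Real.sqrt L := by positivity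
  nlinarith

end PsiPart

/-- **Corollary (Overlap increment estimate).**
For `0 ≤ α < α' ≤ 1` and `ρ ∈ (0,1]`, with
`q_{α,α'}^N(v,v') = E[ψ_v(α,α')ψ_{v'}]/(𝒥_{σ²}(1) log N + C₀)`: there are constants
`C₇ = C₇(σ,λ) > 0` and `C₈ = C₈(α,α',σ,λ) > 0` such that for `N` large enough
(dependent on `α,α'`, independent of `ρ` except when `α = 0`),
`max_{v,v'∈A_{N,ρ}} |q_{α,α'}^N(v,v') − 𝒥̄_{σ²}(α ∧ b_N, α' ∧ b_N)| ≤ C₇/√(log N) + C₈ρ`. -/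
theorem overlap_increment_estimate
    (M : ℕ) (sigv lamv : ℕ → ℝ) (hparams : ScaleParams M sigv lamv)
    (P : ℕ → MeasureTheory.Measure FieldSp) (hGFF : ∀ N, IsGFF N (P N))
    (C₀ : ℝ) (hC₀ : IsVarBound M sigv lamv P C₀) :
    ∃ C₇ : ℝ, 0 < C₇ ∧ ∀ α α' : ℝ, 0 ≤ α → α < α' → α' ≤ 1 →
      ∃ C₈ : ℝ, 0 < C₈ ∧ ∃ N₀ : ℝ → ℕ, (α ≠ 0 → ∀ ρ ρ' : ℝ, N₀ ρ = N₀ ρ') ∧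
        ∀ ρ : ℝ, 0 < ρ → ρ ≤ 1 → ∀ N ≥ N₀ ρ, ∀ v ∈ AN N ρ, ∀ v' ∈ AN N ρ,
          |(∫ ω, psiInc N M sigv lamv (P N) v α α' ω * psiFld N M sigv lamv (P N) v' ω ∂(P N)) /
              (Jsig2 M sigv lamv 1 * Real.log N + C₀) -
            Jint2 (fun r => (stepFn M sigv lamv r) ^ 2)
                (min α (bScale N v v')) (min α' (bScale N v v')) /
              Jsig2 M sigv lamv 1|
          ≤ C₇ / Real.sqrt (Real.log N) + C₈ * ρ := by
  obtain ⟨hC0, _⟩ := hC₀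
  have hJ := Jpos hparams
  set S : ℝ := ∑ i ∈ Finset.Icc 1 M, ∑ j ∈ Finset.Icc 1 M, sigv i * sigv j * 4 with hS
  have hS0 : 0 ≤ S := Finset.sum_nonneg fun i hi => Finset.sum_nonneg fun j hj => by
    have := mul_pos (hparams.2.1 i hi) (hparams.2.1 j hj); linarith
  have hCK := CK_nonneg
  set C : ℝ := 2 * S * (CK + 1) with hC
  have hCn : 0 ≤ C := by positivity
  refine ⟨(C + C₀) / Jsig2 M sigv lamv 1 + 1, by positivity, ?_⟩
  intro α α' hα hαα hα'
  refine ⟨C / Jsig2 M sigv lamv 1 + 1, by positivity, fun _ => 3, fun _ _ _ => rfl, ?_⟩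
  intro ρ hρ hρ1 N hN v hv v' hv'
  replace hN : 3 ≤ N := hN
  have hb := bScale_mem (v' := v') (AN_sub hv)
  have hL : 1 ≤ Real.log N := by
    rw [Real.le_log_iff_exp_le (by have : 0 < N := by omega
                                   exact_mod_cast this)]
    have h3 : (3:ℝ) ≤ N := by exact_mod_cast hN
    linarith [Real.exp_one_lt_d9]
  have hm1 : 0 ≤ min α (bScale N v v') := le_min hα hb.1
  have hm2 : min α (bScale N v v') ≤ min α' (bScale N v v') := min_le_min_right _ hαα.le
  have hm3 : min α' (bScale N v v') ≤ 1 := (min_le_left _ _).trans hα'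
  have hT := Jint2_bd hparams hm1 hm2 hm3
  refine final_arith hJ hC0 hCn hL hT.1 hT.2 hρ.le ?_
  rw [inc_eq (by omega) hparams (hGFF N) (AN_sub hv) (AN_sub hv') hα (hα.trans hαα.le),
    Jint2_eq hparams hm1 hm2 hm3]
  have f1 := FF_main (by omega) hparams hv hv' hρ.le hα
  have f2 := FF_main (by omega) hparams hv hv' hρ.le (hα.trans hαα.le)
  rw [← hS] at f1 f2
  have hb2 : 2 * (S * (CK + ρ * Real.log N)) ≤ C * (1 + ρ * Real.log N) := by
    have hr : 0 ≤ ρ * Real.log N := mul_nonneg hρ.le (by linarith)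
    have : CK + ρ * Real.log N ≤ (CK + 1) * (1 + ρ * Real.log N) := by nlinarith
    have := mul_le_mul_of_nonneg_left this hS0
    rw [hC]; nlinarith
  rw [abs_le] at f1 f2 ⊢
  constructor <;> linarith [f1.1, f1.2, f2.1, f2.2]
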